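/- arXiv:2212.07165 — 7 statements merged into one kernel-verified Lean document; each statement's English description precedes it below -/
import Mathlib

section
/- Every finitely generated, residually finite group G embeds into a finitely generated group Γ (i.e., there exists an injective group homomorphism G → Γ) such that Γ is perfect, infinite and residually finite, and moreover: if G is a torsion group then Γ is a torsion group, and if G contains no non-abelian free subgroup then Γ contains no non-abelian free subgroup. (This is the content of Theorem 1.1 of the paper, with the conclusions that are expressible without the notion of a branch group.) -/
/-- A group `G` is residually finite if every non-identity element avoids some
finite-index normal subgroup. -/
def ResiduallyFinite (G : Type*) [Group G] : Prop :=
  ∀ g : G, g ≠ 1 → ∃ N : Subgroup G, N.Normal ∧ N.FiniteIndex ∧ g ∉ N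

/-- A group `H` contains a non-abelian free subgroup if the free group on two
generators embeds into `H`. -/
def ContainsNonabelianFree (H : Type*) [Group H] : Prop :=
  ∃ f : FreeGroup (Fin 2) →* H, Function.Injective f

namespace PerfEmb

universe u

set_option linter.deprecated false
set_option linter.unusedSectionVars false
set_option linter.unusedVariables false

/-- No free subgroup, in terms of nontrivial relations. -/
def NF (H : Type*) [Group H] : Prop :=
  ∀ f : FreeGroup (Fin 2) →* H, ∃ w, w ≠ 1 ∧ f w = 1

theorem nf_of_not {H : Type*} [Group H] (h : ¬ ContainsNonabelianFree H) : NF H := by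
  intro f
  by_contra hc
  push Not at hc
  apply h
  refine ⟨f, (injective_iff_map_eq_one f).2 ?_⟩
  intro w hw
  by_contra hne
  exact hc w hne hw

theorem not_of_nf {H : Type*} [Group H] (h : NF H) : ¬ ContainsNonabelianFree H := by
  rintro ⟨f, hf⟩
  obtain ⟨w, hw, hfw⟩ := h f
  exact hw (hf (by rw [hfw, map_one]))

theorem of_not_commute {X : Type*} {x y : X} (h : x ≠ y) :
    FreeGroup.of x * FreeGroup.of y ≠ FreeGroup.of y * FreeGroup.of x := by
  classical
  intro hc
  let f : X → Equiv.Perm (Fin 3) := fun z => if z = x then Equiv.swap 0 1 else Equiv.swap 1 2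
  have := congrArg (FreeGroup.lift f) hc
  simp only [map_mul, FreeGroup.lift_apply_of, f, if_true, if_neg h.symm] at this
  revert this
  decide

theorem comm_pow {X : Type*} (a b : FreeGroup X) (ha : a ≠ 1) (hb : b ≠ 1)
    (hab : a * b = b * a) : ∃ p q : ℤ, p ≠ 0 ∧ q ≠ 0 ∧ a ^ p = b ^ q ∧ a ^ p ≠ 1 := by
  let S : Subgroup (FreeGroup X) := Subgroup.closure {a, b}
  have hcomm : ∀ x ∈ S, ∀ y ∈ S, x * y = y * x := by
    intro x hx y hy
    have := Subgroup.isMulCommutative_closure (k := {a, b}) (by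
      rintro x (rfl | rfl) y (rfl | rfl) <;> first | rfl | exact hab | exact hab.symm)
    have h2 := this.is_comm.comm (⟨x, hx⟩ : S) ⟨y, hy⟩
    exact congrArg Subtype.val h2
  have haS : a ∈ S := Subgroup.subset_closure (by simp)
  have hbS : b ∈ S := Subgroup.subset_closure (by simp)
  let e := IsFreeGroup.mulEquiv S
  have hsub : Subsingleton (IsFreeGroup.Generators S) := by
    constructor
    intro x y
    by_contra hxy
    apply of_not_commute hxy
    apply e.injective
    rw [map_mul, map_mul]
    apply Subtype.ext
    exact hcomm _ (e _).2 _ (e _).2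
  have hne : Nonempty (IsFreeGroup.Generators S) := by
    by_contra hemp
    rw [not_nonempty_iff] at hemp
    apply ha
    have : e.symm ⟨a, haS⟩ = e.symm 1 := Subsingleton.elim _ _
    exact congrArg Subtype.val (e.symm.injective this)
  obtain ⟨x⟩ := hne
  have hcyc : ∀ w : FreeGroup (IsFreeGroup.Generators S), ∃ n : ℤ, FreeGroup.of x ^ n = w := by
    intro w
    induction w using FreeGroup.induction_on with
    | C1 => exact ⟨0, by simp⟩
    | of y => exact ⟨1, by rw [Subsingleton.elim x y]; simp⟩
    | inv_of y _ => exact ⟨-1, by rw [Subsingleton.elim x y]; simp⟩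
    | mul u v hu hv =>
      obtain ⟨n, hn⟩ := hu
      obtain ⟨m, hm⟩ := hv
      exact ⟨n + m, by rw [zpow_add, hn, hm]⟩
  obtain ⟨i, hi⟩ := hcyc (e.symm ⟨a, haS⟩)
  obtain ⟨j, hj⟩ := hcyc (e.symm ⟨b, hbS⟩)
  have hi' : (e (FreeGroup.of x)) ^ i = ⟨a, haS⟩ := by rw [← map_zpow, hi]; simp
  have hj' : (e (FreeGroup.of x)) ^ j = ⟨b, hbS⟩ := by rw [← map_zpow, hj]; simp
  have hi'' : ((e (FreeGroup.of x) : S) : FreeGroup X) ^ i = a := by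
    simpa using congrArg Subtype.val hi'
  have hj'' : ((e (FreeGroup.of x) : S) : FreeGroup X) ^ j = b := by
    simpa using congrArg Subtype.val hj'
  have hi0 : i ≠ 0 := by rintro rfl; exact ha (by rw [← hi'']; simp)
  have hj0 : j ≠ 0 := by rintro rfl; exact hb (by rw [← hj'']; simp)
  refine ⟨j, i, hj0, hi0, ?_, ?_⟩
  · rw [← hi'', ← hj'', ← zpow_mul, ← zpow_mul, mul_comm]
  · intro h1
    rw [← hi'', ← zpow_mul] at h1
    have h2 : (e (FreeGroup.of x)) ^ (i * j) = 1 := Subtype.ext (by simpa using h1)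
    rw [← map_zpow, map_eq_one_iff e e.injective] at h2
    have h3 := congrArg (FreeGroup.lift (fun _ => Multiplicative.ofAdd (1 : ℤ))) h2
    rw [map_zpow, FreeGroup.lift_apply_of, _root_.map_one (FreeGroup.lift _), ← ofAdd_zsmul] at h3
    have h4 := congrArg Multiplicative.toAdd h3
    simp at h4
    tauto

theorem inter_nontriv {X : Type*} (N₁ N₂ : Subgroup (FreeGroup X)) [h₁ : N₁.Normal]
    [h₂ : N₂.Normal] {a b : FreeGroup X} (ha : a ∈ N₁) (hb : b ∈ N₂) (ha1 : a ≠ 1) (hb1 : b ≠ 1) :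
    ∃ c, c ≠ 1 ∧ c ∈ N₁ ∧ c ∈ N₂ := by
  by_cases hab : a * b = b * a
  · obtain ⟨p, q, -, -, h, hne⟩ := comm_pow a b ha1 hb1 hab
    exact ⟨a ^ p, hne, N₁.zpow_mem ha p, h ▸ N₂.zpow_mem hb q⟩
  · refine ⟨a * b * a⁻¹ * b⁻¹, ?_, ?_, ?_⟩
    · intro h
      apply hab
      rwa [mul_inv_eq_one, mul_inv_eq_iff_eq_mul] at h
    · rw [mul_assoc, mul_assoc, ← mul_assoc b]
      exact N₁.mul_mem ha (h₁.conj_mem _ (N₁.inv_mem ha) b)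
    · exact N₂.mul_mem (h₂.conj_mem _ hb a) (N₂.inv_mem hb)

theorem of_pow_ne {X : Type*} (x : X) {k : ℕ} (hk : k ≠ 0) : (FreeGroup.of x) ^ k ≠ 1 := by
  intro h2
  have h3 := congrArg (FreeGroup.lift (fun _ => Multiplicative.ofAdd (1 : ℤ))) h2
  rw [map_pow, FreeGroup.lift_apply_of, _root_.map_one (FreeGroup.lift _), ← ofAdd_nsmul] at h3
  have h4 := congrArg Multiplicative.toAdd h3
  simp at h4
  tauto

/-- A subgroup of the free group containing powers of both generators contains a free group. -/
theorem exists_inj (N : Subgroup (FreeGroup (Fin 2))) (k : ℕ) (hk : k ≠ 0)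
    (h : ∀ i, FreeGroup.of i ^ k ∈ N) :
    ∃ j : FreeGroup (Fin 2) →* FreeGroup (Fin 2), Function.Injective j ∧ ∀ w, j w ∈ N := by
  let e := IsFreeGroup.mulEquiv N
  have hnc : (FreeGroup.of (0 : Fin 2)) ^ k * FreeGroup.of (1 : Fin 2) ^ k ≠
      FreeGroup.of (1 : Fin 2) ^ k * FreeGroup.of (0 : Fin 2) ^ k := by
    intro hc
    obtain ⟨p, q, hp, hq, hpq, -⟩ := comm_pow _ _ (of_pow_ne 0 hk) (of_pow_ne 1 hk) hc
    have h3 := congrArg (FreeGroup.lift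
      (fun i : Fin 2 => if i = 0 then Multiplicative.ofAdd (1 : ℤ) else 1)) hpq
    simp only [map_zpow, map_pow, FreeGroup.lift_apply_of] at h3
    have h4 := congrArg Multiplicative.toAdd h3
    simp at h4
    tauto
  have hns : ¬ Subsingleton (IsFreeGroup.Generators N) := by
    intro hs
    apply hnc
    have key : ∀ u v : FreeGroup (IsFreeGroup.Generators N), u * v = v * u := by
      intro u v
      by_contra hne
      by_cases hn : Nonempty (IsFreeGroup.Generators N)
      · obtain ⟨x⟩ := hn
        have hcyc : ∀ w : FreeGroup (IsFreeGroup.Generators N),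
            ∃ n : ℤ, FreeGroup.of x ^ n = w := by
          intro w
          induction w using FreeGroup.induction_on with
          | C1 => exact ⟨0, by simp⟩
          | of y => exact ⟨1, by rw [Subsingleton.elim x y]; simp⟩
          | inv_of y _ => exact ⟨-1, by rw [Subsingleton.elim x y]; simp⟩
          | mul u v hu hv =>
            obtain ⟨n, hn⟩ := hu
            obtain ⟨m, hm⟩ := hv
            exact ⟨n + m, by rw [zpow_add, hn, hm]⟩
        obtain ⟨n, rfl⟩ := hcyc u
        obtain ⟨m, rfl⟩ := hcyc v
        exact hne (by rw [← zpow_add, ← zpow_add, add_comm])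
      · rw [not_nonempty_iff] at hn
        exact hne (Subsingleton.elim _ _)
    have h5 := key (e.symm ⟨_, h 0⟩) (e.symm ⟨_, h 1⟩)
    rw [← map_mul, ← map_mul] at h5
    exact congrArg Subtype.val (e.symm.injective h5)
  rw [not_subsingleton_iff_nontrivial] at hns
  obtain ⟨x, y, hxy⟩ := hns
  let f : Fin 2 → IsFreeGroup.Generators N := ![x, y]
  have hf : Function.Injective f := by
    intro i j hij
    fin_cases i <;> fin_cases j <;> simp_all [f]
  refine ⟨N.subtype.comp (e.toMonoidHom.comp (FreeGroup.map f)), ?_, fun w => ?_⟩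
  · intro u v huv
    exact FreeGroup.map_injective hf (e.injective (Subtype.ext huv))
  · exact (e (FreeGroup.map f w)).2

theorem nf_pi {ι : Type*} [Finite ι] {G : Type*} [Group G] (h : NF G) : NF (ι → G) := by
  classical
  have := Fintype.ofFinite ι
  intro f
  have : ∀ s : Finset ι, ∃ w, w ≠ 1 ∧ ∀ i ∈ s, f w i = 1 := by
    intro s
    induction s using Finset.induction_on with
    | empty => exact ⟨FreeGroup.of 0, FreeGroup.of_ne_one 0, by simp⟩
    | insert i s his ih =>
      obtain ⟨w, hw, hws⟩ := ih
      obtain ⟨v, hv, hvi⟩ := h ((Pi.evalMonoidHom (fun _ => G) i).comp f)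
      let N : Subgroup (FreeGroup (Fin 2)) := ⨅ j ∈ s, ((Pi.evalMonoidHom (fun _ => G) j).comp f).ker
      have hN : ∀ u, u ∈ N ↔ ∀ j ∈ s, f u j = 1 := by
        intro u
        simp [N, Subgroup.mem_iInf, MonoidHom.mem_ker]
      have : N.Normal := by
        constructor
        intro n hn g
        rw [hN] at hn ⊢
        intro j hj
        simp [hn j hj]
      obtain ⟨c, hc, hc1, hc2⟩ := inter_nontriv N ((Pi.evalMonoidHom (fun _ => G) i).comp f).ker
        ((hN w).2 hws) (MonoidHom.mem_ker.2 hvi) hw hv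
      refine ⟨c, hc, ?_⟩
      intro j hj
      rcases Finset.mem_insert.1 hj with rfl | hj
      · exact hc2
      · exact (hN c).1 hc1 j hj
  obtain ⟨w, hw, hws⟩ := this Finset.univ
  exact ⟨w, hw, funext fun i => hws i (Finset.mem_univ i)⟩

theorem nf_prod {G H : Type*} [Group G] [Group H] (hG : NF G) (hH : Monoid.IsTorsion H) :
    NF (G × H) := by
  intro f
  obtain ⟨v, hv, hv1⟩ := hG ((MonoidHom.fst G H).comp f)
  obtain ⟨k, hk, hk1⟩ := isOfFinOrder_iff_pow_eq_one.1
    (hH (((MonoidHom.snd G H).comp f) (FreeGroup.of 0)))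
  obtain ⟨c, hc, hc1, hc2⟩ := inter_nontriv ((MonoidHom.fst G H).comp f).ker
    ((MonoidHom.snd G H).comp f).ker (MonoidHom.mem_ker.2 hv1)
    (MonoidHom.mem_ker.2 (by rw [map_pow, hk1])) hv (of_pow_ne 0 hk.ne')
  exact ⟨c, hc, Prod.ext hc1 hc2⟩

theorem nf_ext {N W Q : Type*} [Group N] [Group W] [Group Q] [Finite Q] (hN : NF N)
    (i : N →* W) (p : W →* Q) (hip : ∀ w, p w = 1 → ∃ n, i n = w) : NF W := by
  intro f
  obtain ⟨j, hj, hjN⟩ := exists_inj (p.comp f).ker (Nat.card Q) Nat.card_pos.ne'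
    (fun x => MonoidHom.mem_ker.2 (by rw [map_pow, pow_card_eq_one']))
  have : ∀ x : Fin 2, ∃ n, i n = f (j (FreeGroup.of x)) := fun x => hip _ (hjN _)
  choose n hn using this
  obtain ⟨w, hw, hw1⟩ := hN (FreeGroup.lift n)
  have hcomp : i.comp (FreeGroup.lift n) = f.comp j := by
    ext x
    simp [hn]
  refine ⟨j w, fun h => hw (hj (by rw [h, map_one])), ?_⟩
  have := DFunLike.congr_fun hcomp w
  simp only [MonoidHom.comp_apply] at this
  rw [← this, hw1, map_one]

theorem nf_sub {H : Type*} [Group H] (h : NF H) (S : Subgroup H) : NF S := by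
  intro f
  obtain ⟨w, hw, hw1⟩ := h (S.subtype.comp f)
  exact ⟨w, hw, Subtype.ext hw1⟩

/-! Residual finiteness -/

theorem rf_of_hom {G : Type*} [Group G]
    (h : ∀ g : G, g ≠ 1 → ∃ (Q : Type) (_ : Group Q) (_ : Finite Q) (f : G →* Q), f g ≠ 1) :
    ResiduallyFinite G := by
  intro g hg
  obtain ⟨Q, _, _, f, hf⟩ := h g hg
  exact ⟨f.ker, inferInstance, inferInstance, hf⟩

theorem rf_sub {G : Type*} [Group G] (h : ResiduallyFinite G) (S : Subgroup G) :
    ResiduallyFinite S := by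
  intro g hg
  obtain ⟨N, hN, hf, hgN⟩ := h g (fun h => hg (Subtype.ext h))
  refine ⟨N.subgroupOf S, inferInstance, inferInstance, ?_⟩
  exact fun h => hgN h

theorem rf_prod {G H : Type*} [Group G] [Group H] (hG : ResiduallyFinite G)
    (hH : ResiduallyFinite H) : ResiduallyFinite (G × H) := by
  intro g hg
  by_cases h1 : g.1 = 1
  · have h2 : g.2 ≠ 1 := fun h => hg (Prod.ext h1 h)
    obtain ⟨N, hN, hf, hgN⟩ := hH _ h2
    refine ⟨((QuotientGroup.mk' N).comp (MonoidHom.snd G H)).ker, inferInstance, inferInstance, fun h => hgN ?_⟩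
    exact (QuotientGroup.eq_one_iff _).1 (MonoidHom.mem_ker.1 h)
  · obtain ⟨N, hN, hf, hgN⟩ := hG _ h1
    refine ⟨((QuotientGroup.mk' N).comp (MonoidHom.fst G H)).ker, inferInstance, inferInstance, fun h => hgN ?_⟩
    exact (QuotientGroup.eq_one_iff _).1 (MonoidHom.mem_ker.1 h)

theorem torsion_pi {ι : Type*} [Finite ι] {G : Type*} [Group G] (h : Monoid.IsTorsion G) :
    Monoid.IsTorsion (ι → G) := by
  classical
  have := Fintype.ofFinite ι
  intro f
  rw [isOfFinOrder_iff_pow_eq_one]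
  refine ⟨∏ i, orderOf (f i), Finset.prod_pos fun i _ => (h (f i)).orderOf_pos, ?_⟩
  funext i
  rw [Pi.pow_apply, Pi.one_apply, ← orderOf_dvd_iff_pow_eq_one]
  exact Finset.dvd_prod_of_mem _ (Finset.mem_univ i)

theorem torsion_prod {G H : Type*} [Group G] [Group H] (hG : Monoid.IsTorsion G)
    (hH : Monoid.IsTorsion H) : Monoid.IsTorsion (G × H) := by
  intro f
  rw [isOfFinOrder_iff_pow_eq_one]
  refine ⟨orderOf f.1 * orderOf f.2, Nat.mul_pos (hG _).orderOf_pos (hH _).orderOf_pos, ?_⟩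
  ext
  · simp [pow_mul, pow_orderOf_eq_one]
  · rw [mul_comm]; simp [pow_mul, pow_orderOf_eq_one]

theorem torsion_ext {N W Q : Type*} [Group N] [Group W] [Group Q] [Finite Q]
    (hN : Monoid.IsTorsion N)
    (i : N →* W) (p : W →* Q) (hip : ∀ w, p w = 1 → ∃ n, i n = w) : Monoid.IsTorsion W := by
  intro w
  obtain ⟨n, hn⟩ := hip (w ^ Nat.card Q) (by rw [map_pow, pow_card_eq_one'])
  have := MonoidHom.isOfFinOrder i (hN n)
  rw [hn] at this
  exact this.of_pow Nat.card_pos.ne'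

theorem torsion_sub {G : Type*} [Group G] (h : Monoid.IsTorsion G) (S : Subgroup G) :
    Monoid.IsTorsion S := h.subgroup S

/-! The Gupta-Sidki 3-group -/

/-- rooted rotation -/
def fa (c : ZMod 3) : List (ZMod 3) → List (ZMod 3)
  | [] => []
  | x :: w => (x + c) :: w

/-- directed automorphism -/
def ft : List (ZMod 3) → List (ZMod 3)
  | [] => []
  | x :: w => x :: (if x = 0 then ft w else fa x w)

/-- inverse of the directed automorphism -/
def ft' : List (ZMod 3) → List (ZMod 3)
  | [] => []
  | x :: w => x :: (if x = 0 then ft' w else fa (-x) w)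

theorem fa_fa (c d : ZMod 3) (w : List (ZMod 3)) : fa c (fa d w) = fa (c + d) w := by
  cases w with
  | nil => rfl
  | cons x w => simp only [fa]; congr 1; ring

theorem fa_zero (w : List (ZMod 3)) : fa 0 w = w := by
  cases w with
  | nil => rfl
  | cons x w => simp [fa]

theorem ft_ft' (w : List (ZMod 3)) : ft (ft' w) = w := by
  induction w with
  | nil => rfl
  | cons x w ih =>
    simp only [ft, ft']
    split_ifs with h
    · rw [ih]
    · rw [fa_fa, add_neg_cancel, fa_zero]

theorem ft'_ft (w : List (ZMod 3)) : ft' (ft w) = w := by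
  induction w with
  | nil => rfl
  | cons x w ih =>
    simp only [ft, ft']
    split_ifs with h
    · rw [ih]
    · rw [fa_fa, neg_add_cancel, fa_zero]

/-- rooted rotation as permutation -/
def A (c : ZMod 3) : Equiv.Perm (List (ZMod 3)) where
  toFun := fa c
  invFun := fa (-c)
  left_inv w := by rw [fa_fa, neg_add_cancel, fa_zero]
  right_inv w := by rw [fa_fa, add_neg_cancel, fa_zero]

/-- directed automorphism as permutation -/
def T : Equiv.Perm (List (ZMod 3)) where
  toFun := ft
  invFun := ft'
  left_inv := ft'_ft
  right_inv := ft_ft'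

theorem A_add (c d : ZMod 3) : A (c + d) = A c * A d := by
  ext1 w; exact (fa_fa c d w).symm

theorem A_zero : A 0 = 1 := by
  ext1 w; exact fa_zero w

theorem A_neg (c : ZMod 3) : A (-c) = (A c)⁻¹ := by
  rw [eq_inv_iff_mul_eq_one, ← A_add, neg_add_cancel, A_zero]

theorem A_nil (c : ZMod 3) : A c [] = [] := rfl

theorem A_cons (c x : ZMod 3) (w) : A c (x :: w) = (x + c) :: w := rfl

theorem T_cons (x : ZMod 3) (w) : T (x :: w) = x :: (if x = 0 then T w else A x w) := rfl

theorem T_nil : T [] = [] := rfl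

theorem A_cube (c : ZMod 3) : A c ^ 3 = 1 := by
  rw [pow_succ, pow_two, ← A_add, ← A_add, ← A_zero]
  congr 1
  revert c; decide

theorem T_cube : T ^ 3 = 1 := by
  ext1 w
  induction w with
  | nil => rfl
  | cons x w ih =>
    simp only [pow_succ, pow_zero, one_mul, Equiv.Perm.mul_apply, T_cons, Equiv.Perm.one_apply] at ih ⊢
    split_ifs with h
    · rw [ih]
    · have := DFunLike.congr_fun (A_cube x) w
      simp only [pow_succ, pow_zero, one_mul, Equiv.Perm.mul_apply, Equiv.Perm.one_apply] at this
      rw [this]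

/-- conjugates of `T` -/
def Ti (i : ZMod 3) : Equiv.Perm (List (ZMod 3)) := A i * T * A (-i)

theorem Ti_cons (i x : ZMod 3) (w) :
    Ti i (x :: w) = x :: (if x = i then T w else A (x - i) w) := by
  simp only [Ti, Equiv.Perm.mul_apply, A_cons, T_cons, ← sub_eq_add_neg, sub_eq_zero,
    sub_add_cancel]

theorem Ti_nil (i : ZMod 3) : Ti i [] = [] := rfl

/-- evaluation of words -/
def ev (L : List (ZMod 3)) : Equiv.Perm (List (ZMod 3)) := (L.map Ti).prod

theorem ev_cons (i : ZMod 3) (L) : ev (i :: L) = Ti i * ev L := by simp [ev]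

theorem ev_append (L Lb) : ev (L ++ Lb) = ev L * ev Lb := by simp [ev]

theorem ev_shift (s : ZMod 3) (L) : ev (L.map (fun i => i + s)) = A s * ev L * A (-s) := by
  induction L with
  | nil => simp [ev, ← A_add, A_zero]
  | cons i L ih =>
    rw [List.map_cons, ev_cons, ev_cons, ih, Ti, Ti, add_comm i s, neg_add, add_comm (-s), A_add,
      A_add]
    simp only [A_neg]
    group

/-- sections -/
def sec (x : ZMod 3) : ZMod 3 → List (ZMod 3) → List (ZMod 3) × ZMod 3
  | c, [] => ([], c)
  | c, i :: L => if x = i then (c :: (sec x c L).1, (sec x c L).2) else sec x (c + (x - i)) L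

theorem ev_apply (L : List (ZMod 3)) (x : ZMod 3) : ∀ (c : ZMod 3) (w : List (ZMod 3)),
    ev L (x :: w) = x :: (A (-c) * ev (sec x c L).1 * A (sec x c L).2) w := by
  induction L with
  | nil => intro c w; simp [ev, sec, ← A_add, A_zero]
  | cons i L ih =>
    intro c w
    rw [ev_cons, Equiv.Perm.mul_apply]
    by_cases h : x = i
    · rw [ih c, Ti_cons, if_pos h]
      simp only [sec, if_pos h, ev_cons, Ti]
      rw [← Equiv.Perm.mul_apply]
      congr 2
      simp only [A_neg]
      group
    · rw [ih (c + (x - i)), Ti_cons, if_neg h]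
      simp only [sec, if_neg h]
      rw [← Equiv.Perm.mul_apply]
      congr 2
      simp only [← mul_assoc]
      rw [← A_add]
      congr 3
      ring

theorem sec_len (x : ZMod 3) (L) : ∀ c, (sec x c L).1.length = L.count x := by
  induction L with
  | nil => intro c; rfl
  | cons i L ih =>
    intro c
    by_cases h : x = i
    · subst h; simp [sec, ih]
    · simp [sec, h, ih, Ne.symm h]

theorem sec_exp (x : ZMod 3) (L : List (ZMod 3)) :
    ∀ c, (sec x c L).2 = c + (L.map (fun i => x - i)).sum := by
  induction L with
  | nil => intro c; simp [sec]
  | cons i L ih =>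
    intro c
    by_cases h : x = i
    · subst h; simp [sec, ih]
    · simp [sec, h, ih, add_assoc]

theorem fin_of_sec (g : Equiv.Perm (List (ZMod 3))) (h0 : g [] = [])
    (S : ZMod 3 → Equiv.Perm (List (ZMod 3))) (hS : ∀ x w, g (x :: w) = x :: S x w)
    (hf : ∀ x, IsOfFinOrder (S x)) : IsOfFinOrder g := by
  have hp : ∀ n x w, (g ^ n) (x :: w) = x :: (S x ^ n) w := by
    intro n
    induction n with
    | zero => intros; rfl
    | succ n ih => intro x w; rw [pow_succ', pow_succ', Equiv.Perm.mul_apply, ih, hS]; rfl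
  rw [isOfFinOrder_iff_pow_eq_one]
  refine ⟨∏ x, orderOf (S x), Finset.prod_pos fun x _ => (hf x).orderOf_pos, ?_⟩
  ext1 w
  cases w with
  | nil => exact Equiv.Perm.pow_apply_eq_self_of_apply_eq_self h0 _
  | cons x w =>
    rw [hp, orderOf_dvd_iff_pow_eq_one.1 (Finset.dvd_prod_of_mem (fun x => orderOf (S x))
      (Finset.mem_univ x))]
    rfl

theorem ev_nil_apply (L) : ev L [] = [] := by
  induction L with
  | nil => rfl
  | cons i L ih => rw [ev_cons, Equiv.Perm.mul_apply, ih, Ti_nil]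

theorem T_fin : IsOfFinOrder T := isOfFinOrder_iff_pow_eq_one.2 ⟨3, by norm_num, T_cube⟩

theorem stab_case (k : ℕ)
    (ih : ∀ L : List (ZMod 3), L.length < k → ∀ s, IsOfFinOrder (ev L * A s))
    (L : List (ZMod 3)) (hL : L.length ≤ k) : IsOfFinOrder (ev L) := by
  by_cases hx : ∃ x, L.count x = L.length
  · obtain ⟨x, hx⟩ := hx
    have h1 : L = List.replicate L.length x := by
      rw [List.eq_replicate_iff]
      exact ⟨rfl, fun b hb => (List.count_eq_length.1 hx b hb).symm⟩
    have h2 : ev L = A x * T ^ L.length * (A x)⁻¹ := by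
      rw [h1]
      simp only [ev, List.map_replicate, List.prod_replicate, List.length_replicate, Ti, A_neg]
      rw [conj_pow]
    rw [h2]
    have h3 : IsOfFinOrder (T ^ L.length) := T_fin.pow
    exact MonoidHom.isOfFinOrder (MulAut.conj (A x)).toMonoidHom h3
  · push Not at hx
    apply fin_of_sec _ (ev_nil_apply L) (fun x => ev (sec x 0 L).1 * A (sec x 0 L).2)
    · intro x w
      rw [ev_apply L x 0 w]
      simp [A_zero]
    · intro x
      apply ih
      rw [sec_len]
      exact lt_of_lt_of_le (lt_of_le_of_ne List.count_le_length (hx x)) hL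

theorem sum3 (x s : ZMod 3) (L : List (ZMod 3)) :
    ((L ++ L.map (fun i => i + s) ++ L.map (fun i => i + (s + s))).map (fun i => x - i)).sum
      = 0 := by
  induction L with
  | nil => rfl
  | cons i L ih =>
    simp only [List.map_cons, List.map_append, List.sum_append, List.sum_cons, List.cons_append,
      List.map_map] at ih ⊢
    have h3 : (x - i) + (x - (i + s)) + (x - (i + (s + s))) = 0 := by
      clear ih
      revert x i s; decide
    simp only [Function.comp_def] at ih ⊢
    linear_combination ih + h3

theorem count3 (x s : ZMod 3) (hs : s ≠ 0) (L : List (ZMod 3)) :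
    (L ++ L.map (fun i => i + s) ++ L.map (fun i => i + (s + s))).count x = L.length := by
  induction L with
  | nil => rfl
  | cons i L ih =>
    simp only [List.map_cons, List.count_append, List.count_cons, List.cons_append,
      List.length_cons] at ih ⊢
    have h3 : (if i == x then 1 else 0) + (if (i + s) == x then 1 else 0) +
      (if (i + (s + s)) == x then 1 else 0) = 1 := by
      clear ih
      revert x i s; decide
    omega

theorem all_fin (k : ℕ) : ∀ L : List (ZMod 3), L.length = k → ∀ s, IsOfFinOrder (ev L * A s) := by
  induction k using Nat.strong_induction_on with
  | _ k ih =>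
    have ih' : ∀ L : List (ZMod 3), L.length < k → ∀ s, IsOfFinOrder (ev L * A s) :=
      fun L hL => ih _ hL L rfl
    intro L hL s
    by_cases hs : s = 0
    · subst hs
      rw [A_zero, mul_one]
      exact stab_case k ih' L hL.le
    · have h3 : (ev L * A s) ^ 3 =
          ev (L ++ L.map (fun i => i + s) ++ L.map (fun i => i + (s + s))) := by
        have hs3 : A s = (A s)⁻¹ * (A s)⁻¹ := by
          rw [← A_neg, ← A_add]
          congr 1
          revert s; decide
        rw [ev_append, ev_append, ev_shift, ev_shift, A_neg, A_neg, A_add]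
        simp only [pow_succ, pow_zero, one_mul, mul_inv_rev]
        nth_rewrite 3 [hs3]
        group
      have hfin : IsOfFinOrder ((ev L * A s) ^ 3) := by
        rw [h3]
        set M := L ++ L.map (fun i => i + s) ++ L.map (fun i => i + (s + s)) with hM
        apply fin_of_sec _ (ev_nil_apply M) (fun x => ev (sec x 0 M).1)
        · intro x w
          rw [ev_apply M x 0 w]
          have : (sec x 0 M).2 = 0 := by rw [sec_exp, hM, sum3, add_zero]
          simp [A_zero, this]
        · intro x
          apply stab_case k ih'
          rw [sec_len, hM, count3 x s hs, hL]
      exact hfin.of_pow (by norm_num)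

/-- The Gupta-Sidki group -/
def GS : Subgroup (Equiv.Perm (List (ZMod 3))) := Subgroup.closure {A 1, T}

theorem A_mem (c : ZMod 3) : A c ∈ GS := by
  have h1 : A 1 ∈ GS := Subgroup.subset_closure (by simp)
  have hc : c = 0 ∨ c = 1 ∨ c = 1 + 1 := by revert c; decide
  rcases hc with rfl | rfl | rfl
  · rw [A_zero]; exact GS.one_mem
  · exact h1
  · rw [A_add]; exact GS.mul_mem h1 h1

theorem T_mem : T ∈ GS := Subgroup.subset_closure (by simp)

theorem GS_fg : Group.FG GS := by
  rw [Group.fg_iff_subgroup_fg]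
  exact (Subgroup.fg_iff _).2 ⟨{A 1, T}, rfl, by simp⟩

theorem GS_form (g) (hg : g ∈ GS) : ∃ L s, g = ev L * A s := by
  have mulA : ∀ L s Lb sb, ∃ Lbb sbb, (ev L * A s) * (ev Lb * A sb) = ev Lbb * A sbb := by
    intro L s Lb sb
    refine ⟨L ++ Lb.map (fun i => i + s), s + sb, ?_⟩
    rw [ev_append, ev_shift, A_add, A_neg]
    group
  have hpow : ∀ n g, (∃ L s, g = ev L * A s) → ∃ L s, g ^ n = ev L * A s := by
    intro n g hg
    induction n with
    | zero => exact ⟨[], 0, by simp [ev, A_zero]⟩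
    | succ n ih =>
      obtain ⟨L, s, h⟩ := ih
      obtain ⟨Lb, sb, hb⟩ := hg
      obtain ⟨Lbb, sbb, hbb⟩ := mulA L s Lb sb
      exact ⟨Lbb, sbb, by rw [pow_succ, h, ← hbb, hb]⟩
  induction hg using Subgroup.closure_induction with
  | mem x hx =>
    rcases hx with rfl | rfl
    · exact ⟨[], 1, by simp [ev]⟩
    · exact ⟨[0], 0, by simp [ev, Ti, A_zero]⟩
  | one => exact ⟨[], 0, by simp [ev, A_zero]⟩
  | mul x y _ _ hx hy =>
    obtain ⟨L, s, rfl⟩ := hx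
    obtain ⟨Lb, sb, rfl⟩ := hy
    exact mulA _ _ _ _
  | inv x _ hx =>
    have hfin : IsOfFinOrder x := by
      obtain ⟨L, s, rfl⟩ := hx
      exact all_fin _ L rfl s
    have : x⁻¹ = x ^ (orderOf x - 1) := by
      rw [inv_eq_iff_mul_eq_one, mul_pow_sub_one hfin.orderOf_pos.ne', pow_orderOf_eq_one]
    rw [this]
    exact hpow _ _ hx

theorem GS_torsion : Monoid.IsTorsion GS := by
  rintro ⟨g, hg⟩
  obtain ⟨L, s, h⟩ := GS_form g hg
  rw [← Submonoid.isOfFinOrder_coe]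
  change IsOfFinOrder g
  rw [h]
  exact all_fin _ L rfl s

theorem GS_lift (g) (hg : g ∈ GS) : ∃ h ∈ GS, ∀ w, h (0 :: w) = 0 :: g w := by
  have hTi : ∀ i, Ti i ∈ GS := fun i =>
    GS.mul_mem (GS.mul_mem (A_mem _) T_mem) (A_mem _)
  induction hg using Subgroup.closure_induction with
  | mem x hx =>
    rcases hx with rfl | rfl
    · refine ⟨Ti (-1), hTi _, fun w => ?_⟩
      rw [Ti_cons, if_neg (by decide)]
      congr 2
    · exact ⟨Ti 0, hTi _, fun w => by rw [Ti_cons, if_pos rfl]⟩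
  | one => exact ⟨1, GS.one_mem, fun w => rfl⟩
  | mul x y _ _ hx hy =>
    obtain ⟨h, hh, h1⟩ := hx
    obtain ⟨hb, hh', h1'⟩ := hy
    exact ⟨h * hb, GS.mul_mem hh hh', fun w => by
      rw [Equiv.Perm.mul_apply, h1', h1, Equiv.Perm.mul_apply]⟩
  | inv x _ hx =>
    obtain ⟨h, hh, h1⟩ := hx
    refine ⟨h⁻¹, GS.inv_mem hh, fun w => ?_⟩
    rw [Equiv.Perm.inv_eq_iff_eq, h1, ← Equiv.Perm.mul_apply, mul_inv_cancel, Equiv.Perm.one_apply]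

theorem GS_seq (n : ℕ) : ∃ g ∈ GS, ∀ m, g (List.replicate m 0) = List.replicate m 0 ↔ m ≤ n := by
  induction n with
  | zero =>
    refine ⟨A 1, A_mem 1, fun m => ?_⟩
    cases m with
    | zero => simp [A_nil]
    | succ m => simp [List.replicate_succ, A_cons]
  | succ n ih =>
    obtain ⟨g, hg, h⟩ := ih
    obtain ⟨gb, hg', hb⟩ := GS_lift g hg
    refine ⟨gb, hg', fun m => ?_⟩
    cases m with
    | zero =>
      obtain ⟨L, s, rfl⟩ := GS_form gb hg'
      simp [A_nil, ev_nil_apply]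
    | succ m => simp [List.replicate_succ, hb, h]

theorem GS_infinite : Infinite GS := by
  choose g hg h using GS_seq
  refine Infinite.of_injective (fun n => (⟨g n, hg n⟩ : GS)) ?_
  intro n m hnm
  have hnm' : g n = g m := congrArg Subtype.val hnm
  apply le_antisymm
  · rw [← h m, ← hnm', h n]
  · rw [← h n, hnm', h m]

theorem GS_length (g) (hg : g ∈ GS) (w) : (g w).length = w.length := by
  have hA : ∀ c w, (A c w).length = w.length := by
    intro c w; cases w <;> simp [A_nil, A_cons]
  have hT : ∀ w, (T w).length = w.length := by
    intro w
    induction w with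
    | nil => rfl
    | cons x w ih =>
      rw [T_cons]
      split_ifs
      · simp [ih]
      · simp [hA]
  induction hg using Subgroup.closure_induction generalizing w with
  | mem x hx =>
    rcases hx with rfl | rfl
    · exact hA _ _
    · exact hT _
  | one => rfl
  | mul x y _ _ hx hy => rw [Equiv.Perm.mul_apply, hx, hy]
  | inv x _ hx => rw [← hx (x⁻¹ w), ← Equiv.Perm.mul_apply, mul_inv_cancel, Equiv.Perm.one_apply]

theorem GS_rf : ResiduallyFinite GS := by
  intro g hg
  have : ∃ w, g.1 w ≠ w := by
    by_contra hc
    push Not at hc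
    exact hg (Subtype.ext (Equiv.ext hc))
  obtain ⟨w, hw⟩ := this
  have hfin : (MulAction.orbit GS w).Finite := by
    apply (List.finite_length_eq (ZMod 3) w.length).subset
    rintro _ ⟨h, rfl⟩
    exact GS_length h.1 h.2 w
  have hfi : (MulAction.stabilizer GS w).FiniteIndex := by
    constructor
    rw [MulAction.index_stabilizer]
    exact ((Set.ncard_pos hfin).2 (MulAction.nonempty_orbit w)).ne'
  refine ⟨(MulAction.stabilizer GS w).normalCore, inferInstance, inferInstance, fun h => hw ?_⟩
  exact MulAction.mem_stabilizer_iff.1 (Subgroup.normalCore_le _ h)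

theorem exists_psi (G : Type*) [Group G] [Group.FG G] :
    ∃ (κ : Type) (_ : Fintype κ) (ψ : κ → (G →* G)) (k0 : κ), ψ k0 = MonoidHom.id G ∧
      ∀ g, ∏ k, Abelianization.of (ψ k g) = 1 := by
  classical
  have hfg : Group.FG (Abelianization G) :=
    Group.fg_of_surjective (f := Abelianization.of) (QuotientGroup.mk_surjective)
  obtain ⟨ι, J, _, _, p, hp, e, ⟨E⟩⟩ :=
    CommGroup.equiv_free_prod_prod_multiplicative_zmod (Abelianization G)
  have hx : ∀ j : J, ∃ x : G, Abelianization.of x =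
      E.symm (Pi.mulSingle j (Multiplicative.ofAdd (1 : ℤ)), 1) := by
    intro j
    exact QuotientGroup.mk_surjective _
  choose x hx using hx
  let M : ℕ := ∏ i, p i ^ e i
  have hM : 0 < M := Finset.prod_pos fun i _ => pow_pos (hp i).pos _
  have htor : ∀ t : ((i : ι) → Multiplicative (ZMod (p i ^ e i))), t ^ M = 1 := by
    intro t
    funext i
    obtain ⟨d, hd⟩ : p i ^ e i ∣ M := Finset.dvd_prod_of_mem _ (Finset.mem_univ i)
    rw [Pi.pow_apply, Pi.one_apply, hd, pow_mul]
    have : t i ^ (p i ^ e i) = 1 := by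
      apply Multiplicative.toAdd.injective
      rw [toAdd_pow, toAdd_one, nsmul_eq_mul, CharP.cast_eq_zero, zero_mul]
    rw [this, one_pow]
  let pr : J → (G →* Multiplicative ℤ) := fun j =>
    (Pi.evalMonoidHom (fun _ => Multiplicative ℤ) j).comp
      ((MonoidHom.fst _ _).comp (E.toMonoidHom.comp Abelianization.of))
  let ψ : Fin M × Option J → (G →* G) := fun k => match k.2 with
    | none => MonoidHom.id G
    | some j => (zpowersHom G (x j)⁻¹).comp (pr j)
  refine ⟨Fin M × Option J, inferInstance, ψ, (⟨0, hM⟩, none), rfl, ?_⟩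
  intro g
  rw [Fintype.prod_prod_type]
  simp only [Fintype.prod_option, ψ, Finset.prod_const, Finset.card_univ, Fintype.card_fin]
  apply E.injective
  rw [map_pow, map_one]
  refine Prod.ext ?_ (htor _)
  rw [Prod.pow_fst]
  refine Eq.trans (congrArg (· ^ M) ?_) (one_pow M)
  rw [map_mul, map_prod]
  simp only [MonoidHom.comp_apply, zpowersHom_apply, map_zpow, map_inv, hx,
    MulEquiv.apply_symm_apply, MonoidHom.id_apply]
  rw [Prod.fst_mul, Prod.fst_prod]
  funext j
  rw [Pi.mul_apply, Finset.prod_apply]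
  rw [Finset.prod_eq_single j]
  · apply Multiplicative.toAdd.injective
    simp [pr]
  · intro b _ hb
    simp [Pi.mulSingle_eq_of_ne hb.symm]
  · intro h; exact absurd (Finset.mem_univ j) h

section wreath

open scoped commutatorElement

variable {ι : Type} [Fintype ι] [DecidableEq ι] {G : Type u} [Group G]

/-- the alternating wreath product -/
abbrev Wr (ι : Type) [Fintype ι] [DecidableEq ι] (G : Type u) [Group G] : Type u :=
  (ι → G) ⋊[mulAutArrow] (alternatingGroup ι)

/-- antidiagonal elements -/
def cc (i j : ι) (g : G) : ι → G := Pi.mulSingle i g * Pi.mulSingle j g⁻¹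

theorem arrow_single (σ : alternatingGroup ι) (i : ι) (g : G) :
    (mulAutArrow σ : MulAut (ι → G)) (Pi.mulSingle i g) = Pi.mulSingle (σ.1 i) g := by
  funext k
  change (Pi.mulSingle i g : ι → G) (σ⁻¹ • k) = _
  by_cases h : k = σ.1 i
  · subst h
    have : σ⁻¹ • (σ.1 i) = i := inv_smul_smul σ i
    rw [this]; simp
  · rw [Pi.mulSingle_eq_of_ne h, Pi.mulSingle_eq_of_ne]
    intro hb
    apply h
    rw [← hb]
    exact (smul_inv_smul σ k).symm

theorem arrow_cc (σ : alternatingGroup ι) (i j : ι) (g : G) :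
    (mulAutArrow σ : MulAut (ι → G)) (cc i j g) = cc (σ.1 i) (σ.1 j) g := by
  rw [cc, map_mul, arrow_single, arrow_single, cc]

/-- the finite generating set -/
def gens (ι : Type) [Fintype ι] [DecidableEq ι] {G : Type u} [Group G] (S : Set G) :
    Set (Wr ι G) :=
  Set.range (SemidirectProduct.inr : alternatingGroup ι →* Wr ι G) ∪
    ⋃ (i : ι) (j : ι) (_ : i ≠ j),
      Set.image (fun s => (SemidirectProduct.inl (cc i j s) : Wr ι G)) S

/-- the perfect subgroup -/
def EE (ι : Type) [Fintype ι] [DecidableEq ι] {G : Type u} [Group G] (S : Set G) :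
    Subgroup (Wr ι G) := Subgroup.closure (gens ι S)

theorem EE_fg {S : Set G} (hS : S.Finite) : Group.FG (EE ι S) := by
  rw [Group.fg_iff_subgroup_fg, Subgroup.fg_iff]
  refine ⟨gens ι S, rfl, ?_⟩
  apply (Set.finite_range _).union
  refine Set.finite_iUnion fun i => Set.finite_iUnion fun j => Set.finite_iUnion fun _ => ?_
  exact hS.image _

theorem inr_mem (S : Set G) (σ : alternatingGroup ι) : SemidirectProduct.inr σ ∈ EE ι S :=
  Subgroup.subset_closure (Or.inl ⟨σ, rfl⟩)

theorem cc_gen_mem (S : Set G) {i j : ι} (h : i ≠ j) {s : G} (hs : s ∈ S) :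
    SemidirectProduct.inl (cc i j s) ∈ EE ι S := by
  apply Subgroup.subset_closure
  right
  simp only [Set.mem_iUnion]
  exact ⟨i, j, h, s, hs, rfl⟩

theorem cc_mul_inv {i j k : ι} (_ : i ≠ j) (_ : i ≠ k) (_hjk : j ≠ k) (g : G) :
    cc i k g * (cc j k g)⁻¹ = cc i j g := by
  funext l
  simp only [cc, Pi.mul_apply, Pi.inv_apply, Pi.mulSingle_apply]
  split_ifs <;> simp_all

theorem exists_sigma (h5 : 5 ≤ Nat.card ι) {i j : ι} (hij : i ≠ j) :
    ∃ (k : ι) (σ : alternatingGroup ι), i ≠ k ∧ j ≠ k ∧ σ.1 i = j ∧ σ.1 k = k := by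
  rw [Nat.card_eq_fintype_card] at h5
  obtain ⟨k, hk⟩ : ∃ k, k ∉ ({i, j} : Finset ι) := by
    by_contra hc
    push Not at hc
    have h1 : Fintype.card ι ≤ ({i, j} : Finset ι).card :=
      Finset.card_le_card (fun x _ => hc x)
    have := Finset.card_le_two (a := i) (b := j)
    omega
  obtain ⟨l, hl⟩ : ∃ l, l ∉ ({i, j, k} : Finset ι) := by
    by_contra hc
    push Not at hc
    have h1 : Fintype.card ι ≤ ({i, j, k} : Finset ι).card :=
      Finset.card_le_card (fun x _ => hc x)
    have := Finset.card_le_three (a := i) (b := j) (c := k)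
    omega
  simp only [Finset.mem_insert, Finset.mem_singleton, not_or] at hk hl
  refine ⟨k, ⟨Equiv.swap j l * Equiv.swap i l, ?_⟩, Ne.symm hk.1, Ne.symm hk.2, ?_, ?_⟩
  · rw [Equiv.Perm.mem_alternatingGroup, map_mul, Equiv.Perm.sign_swap (Ne.symm hl.1),
      Equiv.Perm.sign_swap (Ne.symm hl.2.1)]
    rfl
  · simp
  · rw [Equiv.Perm.mul_apply, Equiv.swap_apply_of_ne_of_ne hk.1 (Ne.symm hl.2.2),
      Equiv.swap_apply_of_ne_of_ne hk.2 (Ne.symm hl.2.2)]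

theorem EE_perfect (S : Set G) (h5 : 5 ≤ Nat.card ι) : commutator (EE ι S) = ⊤ := by
  have key : EE ι S ≤ ⁅EE ι S, EE ι S⁆ := by
    conv_lhs => rw [EE]
    rw [Subgroup.closure_le]
    rintro _ (⟨σ, rfl⟩ | h)
    · have h1 : σ ∈ commutator (alternatingGroup ι) := by
        rw [commutator_alternatingGroup_eq_top h5]; trivial
      have h2 := Subgroup.mem_map_of_mem (SemidirectProduct.inr : _ →* Wr ι G) h1
      rw [commutator_def, Subgroup.map_commutator] at h2
      refine Subgroup.commutator_mono ?_ ?_ h2 <;>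
      · rintro _ ⟨τ, -, rfl⟩
        exact inr_mem S τ
    · simp only [Set.mem_iUnion] at h
      obtain ⟨i, j, hij, s, hs, rfl⟩ := h
      obtain ⟨k, σ, hik, hjk, hσi, hσk⟩ := exists_sigma h5 hij
      have := Subgroup.commutator_mem_commutator (cc_gen_mem S hik hs) (inr_mem S σ)
      rw [commutatorElement_def, mul_assoc, mul_assoc, ← mul_assoc (SemidirectProduct.inr σ),
        ← map_inv, ← map_inv, ← SemidirectProduct.inl_aut, ← map_mul, map_inv, arrow_cc, hσi, hσk,
        cc_mul_inv hij hik hjk] at this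
      exact this
  have h3 := Subgroup.map_subtype_commutator (EE ι S)
  apply Subgroup.map_injective (EE ι S).subtype_injective
  rw [h3, ← MonoidHom.range_eq_map, Subgroup.range_subtype]
  exact le_antisymm (Subgroup.commutator_le_self _) key

/-- base part -/
def VV (ι : Type) [Fintype ι] [DecidableEq ι] {G : Type u} [Group G] (S : Set G) :
    Subgroup (ι → G) := (EE ι S).comap SemidirectProduct.inl

theorem comm_cc {i j k : ι} (hij : i ≠ j) (hik : i ≠ k) (hjk : j ≠ k) (g h : G) :
    ⁅(cc i j g : ι → G), cc i k h⁆ = Pi.mulSingle i ⁅g, h⁆ := by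
  funext l
  simp only [cc, commutatorElement_def, Pi.mul_apply, Pi.inv_apply, Pi.mulSingle_apply]
  split_ifs <;> simp_all

theorem exists_third (h5 : 5 ≤ Nat.card ι) (i j : ι) : ∃ k, i ≠ k ∧ j ≠ k := by
  rw [Nat.card_eq_fintype_card] at h5
  by_contra hc
  push Not at hc
  have h1 : Fintype.card ι ≤ ({i, j} : Finset ι).card :=
    Finset.card_le_card (fun x _ => by
      simp only [Finset.mem_insert, Finset.mem_singleton]
      by_cases h : i = x
      · exact Or.inl h.symm
      · exact Or.inr (hc x h).symm)
  have := Finset.card_le_two (a := i) (b := j)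
  omega

theorem cc_mem {S : Set G} (hS : Subgroup.closure S = ⊤) (h5 : 5 ≤ Nat.card ι) (g : G) :
    ∀ i j : ι, i ≠ j → cc i j g ∈ VV ι S := by
  have hg : g ∈ Subgroup.closure S := by rw [hS]; trivial
  induction hg using Subgroup.closure_induction with
  | mem s hs => intro i j hij; exact cc_gen_mem S hij hs
  | one => intro i j hij; simp [cc, (VV ι S).one_mem]
  | inv g _ ih =>
    intro i j hij
    have : cc i j g⁻¹ = cc j i g := by
      funext l
      simp only [cc, Pi.mul_apply, Pi.mulSingle_apply]
      split_ifs <;> simp_all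
    rw [this]
    exact ih j i hij.symm
  | mul g h _ _ ihg ihh =>
    intro i j hij
    obtain ⟨k, hik, hjk⟩ := exists_third h5 i j
    have h1 : ⁅(cc j i h : ι → G), cc j k g⁆ ∈ VV ι S :=
      Subgroup.commutator_le_self _ (Subgroup.commutator_mem_commutator
        (ihh j i hij.symm) (ihg j k hjk))
    have : (cc i j (g * h) : ι → G) =
        cc i j g * cc i j h * ⁅(cc j i h : ι → G), cc j k g⁆ := by
      rw [comm_cc hij.symm hjk hik]
      funext l
      simp only [cc, Pi.mul_apply, Pi.mulSingle_apply, commutatorElement_def]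
      split_ifs <;> simp_all [mul_assoc]
    rw [this]
    exact mul_mem (mul_mem (ihg i j hij) (ihh i j hij)) h1

theorem single_mem {S : Set G} (hS : Subgroup.closure S = ⊤) (h5 : 5 ≤ Nat.card ι) (i : ι)
    (g : G) (hg : g ∈ commutator G) : Pi.mulSingle i g ∈ VV ι S := by
  have : commutator G ≤ (VV ι S).comap (MonoidHom.mulSingle (fun _ => G) i) := by
    rw [commutator_def, Subgroup.commutator_le]
    intro a _ b _
    obtain ⟨j, hij, -⟩ := exists_third h5 i i
    obtain ⟨k, hik, hjk⟩ := exists_third h5 i j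
    change Pi.mulSingle i ⁅a, b⁆ ∈ VV ι S
    rw [← comm_cc hij hik hjk]
    exact Subgroup.commutator_le_self _ (Subgroup.commutator_mem_commutator
        (cc_mem hS h5 a i j hij) (cc_mem hS h5 b i k hik))
  exact this hg

theorem mem_VV {S : Set G} (hS : Subgroup.closure S = ⊤) (h5 : 5 ≤ Nat.card ι) (i₀ : ι)
    (s : Finset ι) : i₀ ∉ s → ∀ f : ι → G, (∀ i, i ∉ s → i ≠ i₀ → f i = 1) →
    ∏ i, Abelianization.of (f i) = 1 → f ∈ VV ι S := by
  induction s using Finset.induction_on with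
  | empty =>
    intro _ f hf hprod
    have hf' : f = Pi.mulSingle i₀ (f i₀) := by
      funext i
      by_cases h : i = i₀
      · subst h; simp
      · rw [hf i (by simp) h, Pi.mulSingle_eq_of_ne h]
    rw [Finset.prod_eq_single i₀ (fun i _ h => by rw [hf i (by simp) h, map_one])
      (fun h => absurd (Finset.mem_univ _) h)] at hprod
    rw [hf']
    apply single_mem hS h5
    rw [← Abelianization.ker_of]
    exact hprod
  | insert i s his ih =>
    intro h0 f hf hprod
    simp only [Finset.mem_insert, not_or] at h0
    have h1 : f = cc i i₀ (f i) * ((cc i i₀ (f i))⁻¹ * f) := by group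
    rw [h1]
    refine mul_mem (cc_mem hS h5 _ _ _ (Ne.symm h0.1)) (ih h0.2 _ ?_ ?_)
    · intro j hj hj0
      by_cases hji : j = i
      · subst hji
        simp [cc, Pi.mulSingle_eq_of_ne hj0]
      · simp [cc, Pi.mulSingle_eq_of_ne hj0, Pi.mulSingle_eq_of_ne hji,
          hf j (by simp [hj, hji]) hj0]
    · have hcc : ∏ l, Abelianization.of ((cc i i₀ (f i) : ι → G) l) = 1 := by
        simp only [cc, Pi.mul_apply, map_mul, Finset.prod_mul_distrib]
        rw [Finset.prod_eq_single i (fun l _ h => by rw [Pi.mulSingle_eq_of_ne h, map_one])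
          (fun h => absurd (Finset.mem_univ _) h),
          Finset.prod_eq_single i₀ (fun l _ h => by rw [Pi.mulSingle_eq_of_ne h, map_one])
          (fun h => absurd (Finset.mem_univ _) h)]
        simp
      simp only [Pi.mul_apply, Pi.inv_apply, map_mul, map_inv, Finset.prod_mul_distrib,
        Finset.prod_inv_distrib, hcc, hprod]
      simp

theorem wr_ker (w : Wr ι G) (h : SemidirectProduct.rightHom w = 1) :
    ∃ f : ι → G, SemidirectProduct.inl f = w :=
  ⟨w.left, SemidirectProduct.ext rfl h.symm⟩

instance {Q : Type*} [Group Q] [Finite Q] : Finite ((ι → Q) ⋊[mulAutArrow] (alternatingGroup ι)) :=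
  Finite.of_injective (fun w => (w.left, w.right)) (fun _ _ h =>
    SemidirectProduct.ext (congrArg Prod.fst h) (congrArg Prod.snd h))

theorem wr_rf (h : ResiduallyFinite G) : ResiduallyFinite (Wr ι G) := by
  intro w hw
  by_cases hr : w.right = 1
  · have hl : ∃ i, w.left i ≠ 1 := by
      by_contra hc
      push Not at hc
      exact hw (SemidirectProduct.ext (funext hc) hr)
    obtain ⟨i, hi⟩ := hl
    obtain ⟨N, hN, hf, hgN⟩ := h _ hi
    let F : Wr ι G →* (ι → G ⧸ N) ⋊[mulAutArrow] (alternatingGroup ι) :=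
      SemidirectProduct.map (MonoidHom.compLeft (QuotientGroup.mk' N) ι) (MonoidHom.id _)
        (fun g => by ext f k; rfl)
    refine ⟨F.ker, inferInstance, inferInstance, fun hk => hgN ?_⟩
    have h1 := congrArg SemidirectProduct.left (MonoidHom.mem_ker.1 hk)
    have h2 := congrFun h1 i
    exact (QuotientGroup.eq_one_iff _).1 h2
  · exact ⟨(SemidirectProduct.rightHom : Wr ι G →* _).ker, inferInstance, inferInstance, hr⟩

end wreath

theorem main_step {G : Type u} [Group G] (hfg : Group.FG G) (hrf : ResiduallyFinite G) :
    ∃ (Γ : Type u) (_ : Group Γ) (φ : G →* Γ), Function.Injective φ ∧ Group.FG Γ ∧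
      commutator Γ = ⊤ ∧ ResiduallyFinite Γ ∧ (Monoid.IsTorsion G → Monoid.IsTorsion Γ) ∧
      (NF G → NF Γ) := by
  classical
  obtain ⟨κ, _, ψ, k0, hk0, hψ⟩ := exists_psi G
  obtain ⟨S, hS, hSfin⟩ := (Subgroup.fg_iff _).1 ((Group.fg_def).1 hfg)
  let ι := κ ⊕ Fin 5
  have h5 : 5 ≤ Nat.card ι := by
    rw [Nat.card_eq_fintype_card]
    simp [ι]
  let Ψ : G →* (ι → G) := Pi.monoidHom (Sum.elim ψ (fun _ => 1))
  have hΨ : ∀ g, (SemidirectProduct.inl (Ψ g) : Wr ι G) ∈ EE ι S := by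
    intro g
    change Ψ g ∈ VV ι S
    refine mem_VV hS h5 (Sum.inl k0) (Finset.univ.erase (Sum.inl k0)) (by simp) _ ?_ ?_
    · intro i hi hi'
      simp [hi'] at hi
    · rw [Fintype.prod_sum_type]
      have e1 : ∀ k, Ψ g (Sum.inl k) = ψ k g := fun _ => rfl
      have e2 : ∀ k, Ψ g (Sum.inr k) = 1 := fun _ => rfl
      simp only [e1, e2, hψ, map_one, Finset.prod_const_one, mul_one]
  refine ⟨EE ι S, inferInstance, ((SemidirectProduct.inl : _ →* Wr ι G).comp Ψ).codRestrict _ hΨ,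
    ?_, EE_fg hSfin, EE_perfect S h5, rf_sub (wr_rf hrf) _, ?_, ?_⟩
  · intro a b hab
    have h1 : Ψ a = Ψ b := SemidirectProduct.inl_injective (congrArg Subtype.val hab)
    have h2 := congrFun h1 (Sum.inl k0)
    change ψ k0 a = ψ k0 b at h2
    simpa [hk0] using h2
  · intro ht
    exact torsion_sub (torsion_ext (torsion_pi ht) SemidirectProduct.inl
      SemidirectProduct.rightHom wr_ker) _
  · intro ht
    exact nf_sub (nf_ext (nf_pi ht) SemidirectProduct.inl
      SemidirectProduct.rightHom wr_ker) _

theorem nf_torsion {H : Type*} [Group H] (h : Monoid.IsTorsion H) : NF H := by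
  intro f
  obtain ⟨k, hk, hk1⟩ := isOfFinOrder_iff_pow_eq_one.1 (h (f (FreeGroup.of 0)))
  exact ⟨_, of_pow_ne 0 hk.ne', by rw [map_pow, hk1]⟩

theorem main {G : Type u} [Group G]
    (hfg : Group.FG G) (hrf : ResiduallyFinite G) :
    ∃ (Γ : Type u) (_ : Group Γ) (φ : G →* Γ),
      Function.Injective φ ∧
      Group.FG Γ ∧
      commutator Γ = ⊤ ∧
      Infinite Γ ∧
      ResiduallyFinite Γ ∧
      (Monoid.IsTorsion G → Monoid.IsTorsion Γ) ∧
      (¬ ContainsNonabelianFree G → ¬ ContainsNonabelianFree Γ) := by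
  let e : ULift.{u} GS ≃* GS := MulEquiv.ulift
  have hT : Monoid.IsTorsion (ULift.{u} GS) := fun x => by
    have h1 := MonoidHom.isOfFinOrder e.symm.toMonoidHom (GS_torsion (e x))
    simpa using h1
  have hfgT : Group.FG (ULift.{u} GS) :=
    have := GS_fg
    Group.fg_of_surjective (f := e.symm.toMonoidHom) e.symm.surjective
  have hrfT : ResiduallyFinite (ULift.{u} GS) := by
    intro g hg
    obtain ⟨N, hN, hf, hgN⟩ := GS_rf (e g) (fun h => hg (e.injective (by rw [h, map_one])))
    refine ⟨((QuotientGroup.mk' N).comp e.toMonoidHom).ker, inferInstance, inferInstance,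
      fun h => hgN ?_⟩
    exact (QuotientGroup.eq_one_iff _).1 (MonoidHom.mem_ker.1 h)
  have hinf : Infinite (ULift.{u} GS) := have := GS_infinite; inferInstance
  obtain ⟨Γ, _, φ, hφ, h1, h2, h3, h4, h5⟩ :=
    main_step (G := G × ULift.{u} GS) inferInstance (rf_prod hrf hrfT)
  refine ⟨Γ, inferInstance, φ.comp (MonoidHom.inl _ _), ?_, h1, h2, ?_, h3, ?_, ?_⟩
  · intro a b hab
    exact congrArg Prod.fst (hφ hab)
  · exact Infinite.of_injective (fun x : ULift.{u} GS => φ (1, x)) fun a b hab =>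
      congrArg Prod.snd (hφ hab)
  · exact fun ht => h4 (torsion_prod ht hT)
  · exact fun hn => not_of_nf (h5 (nf_prod (nf_of_not hn) hT))

end PerfEmb

/-- Every finitely generated, residually finite group `G` embeds into a finitely
generated, perfect, infinite, residually finite group `Γ` such that torsion and the
absence of non-abelian free subgroups are preserved. -/
theorem embeds_into_fg_perfect_group {G : Type u} [Group G]
    (hfg : Group.FG G) (hrf : ResiduallyFinite G) :
    ∃ (Γ : Type u) (_ : Group Γ) (φ : G →* Γ),
      Function.Injective φ ∧
      Group.FG Γ ∧
      commutator Γ = ⊤ ∧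
      Infinite Γ ∧
      ResiduallyFinite Γ ∧
      (Monoid.IsTorsion G → Monoid.IsTorsion Γ) ∧
      (¬ ContainsNonabelianFree G → ¬ ContainsNonabelianFree Γ) := by
  exact PerfEmb.main hfg hrf
end

section
/- Let r be a positive integer and let w be an element of the free group F_r on r generators. If G is a finitely generated, residually finite group that satisfies the law w up to powers, then G embeds into a finitely generated, perfect, infinite group Γ (i.e., there is an injective group homomorphism G → Γ) that satisfies the law w up to powers. (Part (4) of Theorem 1.1, stated without the branch-group conclusion.) -/
/-- A group `H` satisfies the law `w ∈ F_r` if every homomorphism `F_r →* H`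
sends `w` to the identity. -/
def SatisfiesLaw {r : ℕ} (w : FreeGroup (Fin r)) (H : Type*) [Group H] : Prop :=
  ∀ f : FreeGroup (Fin r) →* H, f w = 1

/-- A group `Γ` satisfies the law `w ∈ F_r` up to powers if for all
`γ₁, …, γ_r ∈ Γ` there are positive integers `t₁, …, t_r` such that
`⟨γ₁^{t₁}, …, γ_r^{t_r}⟩` satisfies the law `w`. -/
def SatisfiesLawUpToPowers {r : ℕ} (w : FreeGroup (Fin r)) (Γ : Type*) [Group Γ] : Prop :=
  ∀ γ : Fin r → Γ, ∃ t : Fin r → ℕ, (∀ i, 0 < t i) ∧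
    SatisfiesLaw w (Subgroup.closure (Set.range fun i => γ i ^ t i))


namespace GS

/-- Permutations of the ternary rooted tree. -/
abbrev P := Equiv.Perm (List (ZMod 3))

def psiFun (g : ZMod 3 → P) : List (ZMod 3) → List (ZMod 3)
  | [] => []
  | x :: l => x :: g x l

def psi : (ZMod 3 → P) →* P where
  toFun g :=
    { toFun := psiFun g
      invFun := psiFun g⁻¹
      left_inv := by rintro (_ | ⟨x, l⟩) <;> simp [psiFun]
      right_inv := by rintro (_ | ⟨x, l⟩) <;> simp [psiFun] }
  map_one' := by ext1 l; rcases l with _ | ⟨x, l⟩ <;> simp [psiFun]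
  map_mul' f g := by ext1 l; rcases l with _ | ⟨x, l⟩ <;> simp [psiFun]

@[simp] lemma psi_nil (g : ZMod 3 → P) : psi g [] = [] := rfl
@[simp] lemma psi_cons (g : ZMod 3 → P) (x l) : psi g (x :: l) = x :: g x l := rfl

lemma psi_inj : Function.Injective psi := by
  intro f g h
  funext x
  ext1 l
  have := congrArg (fun p : P => p (x :: l)) h
  simpa using this

def aFun (i : ZMod 3) : List (ZMod 3) → List (ZMod 3)
  | [] => []
  | x :: l => (x + i) :: l

def A (i : ZMod 3) : P where
  toFun := aFun i
  invFun := aFun (-i)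
  left_inv := by rintro (_ | ⟨x, l⟩) <;> simp [aFun]
  right_inv := by rintro (_ | ⟨x, l⟩) <;> simp [aFun]

@[simp] lemma A_nil (i) : A i [] = [] := rfl
@[simp] lemma A_cons (i x l) : A i (x :: l) = (x + i) :: l := rfl

lemma A_zero : A 0 = 1 := by
  ext1 l; rcases l with _ | ⟨x, l⟩ <;> simp
lemma A_add (i j) : A (i + j) = A i * A j := by
  ext1 l; rcases l with _ | ⟨x, l⟩ <;> simp [add_left_comm, add_comm]
lemma A_neg (i) : A (-i) = (A i)⁻¹ := by
  rw [eq_inv_iff_mul_eq_one, ← A_add]; simp [A_zero]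

def bFun (k : ZMod 3) : List (ZMod 3) → List (ZMod 3)
  | [] => []
  | x :: l => x :: (if x = 0 then bFun k l else aFun (x * k) l)

lemma bFun_bFun (k m : ZMod 3) (l) : bFun k (bFun m l) = bFun (k + m) l := by
  induction l with
  | nil => rfl
  | cons x l ih =>
    by_cases h : x = 0
    · simp [bFun, h, ih]
    · have := congrArg (fun p : P => p l) (A_add (x * k) (x * m))
      simp only [bFun, h, if_false, mul_add]
      exact congrArg _ this.symm

lemma bFun_zero (l) : bFun 0 l = l := by
  induction l with
  | nil => rfl
  | cons x l ih =>
    have := congrArg (fun p : P => p l) A_zero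
    by_cases h : x = 0
    · simp [bFun, h, ih]
    · simp only [bFun, h, if_false, mul_zero]
      exact congrArg _ this

def B (k : ZMod 3) : P where
  toFun := bFun k
  invFun := bFun (-k)
  left_inv l := by rw [bFun_bFun]; simp [bFun_zero]
  right_inv l := by rw [bFun_bFun]; simp [bFun_zero]

lemma B_zero : B 0 = 1 := by ext1 l; exact bFun_zero l
lemma B_add (i j) : B (i + j) = B i * B j := by ext1 l; exact (bFun_bFun i j l).symm
lemma B_neg (i) : B (-i) = (B i)⁻¹ := by
  rw [eq_inv_iff_mul_eq_one, ← B_add]; simp [B_zero]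

lemma B_psi (k) : B k = psi (fun x => if x = 0 then B k else A (x * k)) := by
  ext1 l
  rcases l with _ | ⟨x, l⟩
  · rfl
  · by_cases h : x = 0
    · subst h; simp; rfl
    · simp only [psi_cons, h, if_false]
      change bFun k (x :: l) = _
      simp only [bFun, h, if_false]; rfl

lemma conj_psi (i) (f) : A i * psi f * A (-i) = psi (fun x => f (x - i)) := by
  ext1 l
  rcases l with _ | ⟨x, l⟩
  · rfl
  · simp [sub_eq_add_neg]

/-- The letter `a^i b^k a^{-i}`. -/
def letter (p : ZMod 3 × ZMod 3) : P := A p.1 * B p.2 * A (-p.1)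

def lsec (x : ZMod 3) (p : ZMod 3 × ZMod 3) : P :=
  if x = p.1 then B p.2 else A ((x - p.1) * p.2)

lemma letter_psi (p) : letter p = psi (fun x => lsec x p) := by
  rw [letter, B_psi, conj_psi]
  congr 1; funext x; simp only [lsec, sub_eq_zero]

def val (L : List (ZMod 3 × ZMod 3)) : P := (L.map letter).prod
def sec (x : ZMod 3) (L : List (ZMod 3 × ZMod 3)) : P := (L.map (lsec x)).prod

lemma val_psi (L) : val L = psi (fun x => sec x L) := by
  induction L with
  | nil => simp [val, sec]; exact psi.map_one.symm
  | cons p L ih =>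
    have h1 : val (p :: L) = letter p * val L := by simp [val]
    have h2 : (fun x => sec x (p :: L)) = (fun x => lsec x p) * (fun x => sec x L) := by
      funext x; simp [sec]
    rw [h1, h2, map_mul, ih, letter_psi]

def shift (m : ZMod 3) (L : List (ZMod 3 × ZMod 3)) := L.map (fun p => (m + p.1, p.2))

lemma A_val (m L) : A m * val L = val (shift m L) * A m := by
  induction L with
  | nil => simp [val, shift]
  | cons p L ih =>
    have h1 : val (p :: L) = letter p * val L := by simp [val]
    have h2 : val (shift m (p :: L)) = letter (m + p.1, p.2) * val (shift m L) := by
      simp [val, shift]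
    have h3 : A m * letter p = letter (m + p.1, p.2) * A m := by
      simp only [letter, A_add, A_neg]; group
    rw [h1, h2, ← mul_assoc, h3, mul_assoc, ih, mul_assoc]

lemma B_val (k L) : B k * val L = val ((0, k) :: L) := by
  simp [val, letter, A_zero]

lemma sec_word (x : ZMod 3) (L) : ∃ L' : List (ZMod 3 × ZMod 3),
    L'.length = L.countP (fun p => p.1 = x) ∧
    sec x L = val L' * A ((L.map (fun p => (x - p.1) * p.2)).sum) := by
  induction L with
  | nil => exact ⟨[], by simp [sec, val, A_zero]⟩
  | cons p L ih =>
    obtain ⟨L', h1, h2⟩ := ih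
    have h3 : sec x (p :: L) = lsec x p * sec x L := by simp [sec]
    by_cases h : x = p.1
    · refine ⟨(0, p.2) :: L', ?_, ?_⟩
      · simp [h1, h]
      · rw [h3, h2, ← B_val]; simp [lsec, h, mul_assoc]
    · refine ⟨shift ((x - p.1) * p.2) L', ?_, ?_⟩
      · simp [h1, shift, Ne.symm h]
      · rw [h3, h2]; simp only [lsec, h, if_false, List.map_cons, List.sum_cons]
        rw [← mul_assoc, A_val, A_add, mul_assoc]

lemma psi_fin {f : ZMod 3 → P} (h : ∀ x, IsOfFinOrder (f x)) : IsOfFinOrder (psi f) := by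
  apply MonoidHom.isOfFinOrder
  rw [isOfFinOrder_iff_pow_eq_one]
  refine ⟨∏ x, orderOf (f x), Finset.prod_pos fun x _ => (h x).orderOf_pos, ?_⟩
  funext x
  rw [Pi.pow_apply, Pi.one_apply, ← orderOf_dvd_iff_pow_eq_one]
  exact Finset.dvd_prod_of_mem _ (Finset.mem_univ x)

lemma letter_fin (p) : IsOfFinOrder (letter p) := by
  rw [isOfFinOrder_iff_pow_eq_one]
  refine ⟨3, by norm_num, ?_⟩
  rw [letter, A_neg, conj_pow]
  have : B p.2 ^ 3 = 1 := by
    rw [pow_three, ← B_add, ← B_add, ← B_zero]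
    congr 1
    generalize p.2 = k
    revert k; decide
  simp [this]

lemma fin_zero (n : ℕ) (ih : ∀ m < n, ∀ L : List (ZMod 3 × ZMod 3), L.length = m → ∀ e,
    IsOfFinOrder (val L * A e)) (L : List (ZMod 3 × ZMod 3)) (hL : L.length = n) :
    IsOfFinOrder (val L) := by
  rcases L with _ | ⟨p, _ | ⟨q, L⟩⟩
  · simp [val]
  · simpa [val] using letter_fin p
  · by_cases h : p.1 = q.1
    · have : val (p :: q :: L) = val ((p.1, p.2 + q.2) :: L) := by
        simp only [val, List.map_cons, List.prod_cons, ← mul_assoc]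
        congr 1
        simp only [letter, h, A_neg, B_add]; group
      rw [this]
      have := ih (L.length + 1) (by simp at hL; omega) ((p.1, p.2 + q.2) :: L) (by simp) 0
      simpa [A_zero] using this
    · rw [val_psi]
      apply psi_fin
      intro x
      obtain ⟨L', h1, h2⟩ := sec_word x (p :: q :: L)
      rw [h2]
      refine ih _ ?_ L' rfl _
      rw [h1, ← hL]
      have := List.countP_le_length (p := fun p : ZMod 3 × ZMod 3 => decide (p.1 = x)) (l := L)
      simp only [List.countP_cons, List.length_cons]
      by_cases hp : p.1 = x
      · have hq : q.1 ≠ x := fun hq => h (hp.trans hq.symm)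
        simp [hp, hq]; omega
      · simp [hp]; split_ifs <;> omega

lemma count3 (x e : ZMod 3) (he : e ≠ 0) (L : List (ZMod 3 × ZMod 3)) :
    (L ++ (shift e L ++ shift (e + e) L)).countP (fun p => p.1 = x) = L.length := by
  induction L with
  | nil => rfl
  | cons p L ih =>
    simp only [List.countP_append, shift, List.map_cons, List.countP_cons, List.length_cons] at ih ⊢
    rw [← ih]
    have : (if decide (p.1 = x) = true then 1 else 0) + ((if decide (e + p.1 = x) = true then 1 else 0)
      + (if decide (e + e + p.1 = x) = true then 1 else 0)) = 1 := by
      clear ih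
      generalize p.1 = i
      revert x e i; decide
    omega

lemma sum3 (x e : ZMod 3) (L : List (ZMod 3 × ZMod 3)) :
    ((L ++ (shift e L ++ shift (e + e) L)).map (fun p => (x - p.1) * p.2)).sum = 0 := by
  induction L with
  | nil => rfl
  | cons p L ih =>
    simp only [List.map_append, List.sum_append, shift, List.map_cons, List.sum_cons] at ih ⊢
    have h3 : (3 : ZMod 3) = 0 := rfl
    linear_combination ih + ((x - p.1) * p.2 - e * p.2) * h3

lemma fin_all (n : ℕ) : ∀ L : List (ZMod 3 × ZMod 3), L.length = n → ∀ e,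
    IsOfFinOrder (val L * A e) := by
  induction n using Nat.strong_induction_on with
  | _ n ih =>
    intro L hL e
    by_cases he : e = 0
    · subst he
      simpa [A_zero] using fin_zero n ih L hL
    · apply IsOfFinOrder.of_pow (n := 3) _ (by norm_num)
      have : (val L * A e) ^ 3 = val (L ++ (shift e L ++ shift (e + e) L)) := by
        have hv : ∀ L M, val (L ++ M) = val L * val M := by simp [val]
        have h1 : A e * val L = val (shift e L) * A e := A_val _ _
        have h2 : A (e + e) * val L = val (shift (e + e) L) * A (e + e) := A_val _ _
        have h3 : A (e + e) * A e = 1 := by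
          rw [← A_add, ← A_zero]; congr 1; clear h1 h2; revert e; decide
        calc (val L * A e) ^ 3 = val L * (A e * val L) * A e * val L * A e := by
              simp only [pow_three, mul_assoc]
          _ = val L * val (shift e L) * (A (e + e) * val L) * A e := by
              rw [h1, A_add]; simp only [mul_assoc]
          _ = _ := by
              rw [h2, hv, hv]; simp only [mul_assoc]; rw [h3, mul_one]
      rw [this, val_psi]
      apply psi_fin
      intro x
      obtain ⟨L', h1, h2⟩ := sec_word x (L ++ (shift e L ++ shift (e + e) L))
      rw [h2, sum3, A_zero, mul_one]
      rw [count3 x e he] at h1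
      exact fin_zero n ih L' (h1.trans hL)

/-- The Gupta–Sidki group. -/
def T : Subgroup P := Subgroup.closure {A 1, B 1}

lemma A_mem (i) : A i ∈ T := by
  have h1 : A 1 ∈ T := Subgroup.subset_closure (by simp)
  have : ∀ i : ZMod 3, i = 0 ∨ i = 1 ∨ i = 1 + 1 := by decide
  rcases this i with rfl | rfl | rfl
  · rw [A_zero]; exact one_mem _
  · exact h1
  · rw [A_add]; exact mul_mem h1 h1

lemma B_mem (i) : B i ∈ T := by
  have h1 : B 1 ∈ T := Subgroup.subset_closure (by simp)
  have : ∀ i : ZMod 3, i = 0 ∨ i = 1 ∨ i = 1 + 1 := by decide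
  rcases this i with rfl | rfl | rfl
  · rw [B_zero]; exact one_mem _
  · exact h1
  · rw [B_add]; exact mul_mem h1 h1

lemma T_word {g : P} (hg : g ∈ T) : ∃ L e, g = val L * A e := by
  have hA : ∀ i g, (∃ L e, g = val L * A e) → ∃ L e, A i * g = val L * A e := by
    rintro i _ ⟨L, e, rfl⟩
    exact ⟨shift i L, i + e, by rw [← mul_assoc, A_val, A_add, mul_assoc]⟩
  have hB : ∀ i g, (∃ L e, g = val L * A e) → ∃ L e, B i * g = val L * A e := by
    rintro i _ ⟨L, e, rfl⟩
    exact ⟨(0, i) :: L, e, by rw [← mul_assoc, B_val]⟩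
  induction hg using Subgroup.closure_induction_left with
  | one => exact ⟨[], 0, by simp [val, A_zero]⟩
  | mul_left x hx y hy ih =>
    rcases hx with rfl | rfl
    · exact hA _ _ ih
    · exact hB _ _ ih
  | inv_mul_cancel x hx y hy ih =>
    rcases hx with rfl | rfl
    · rw [← A_neg]; exact hA _ _ ih
    · rw [← B_neg]; exact hB _ _ ih

lemma T_fin (g : T) : IsOfFinOrder g := by
  obtain ⟨L, e, h⟩ := T_word g.2
  have := fin_all _ L rfl e
  rw [← h] at this
  exact Submonoid.isOfFinOrder_coe.mp this

lemma T_fg : Group.FG T := by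
  rw [Group.fg_iff_subgroup_fg]
  classical exact ⟨{A 1, B 1}, by simp [T]⟩

lemma T_sur {s : P} (hs : s ∈ T) : ∃ f, psi f ∈ T ∧ f 0 = s := by
  have hl : ∀ p, letter p ∈ T := fun p => mul_mem (mul_mem (A_mem _) (B_mem _)) (A_mem _)
  induction hs using Subgroup.closure_induction with
  | mem x hx =>
    rcases hx with rfl | rfl
    · refine ⟨_, letter_psi (2, 1) ▸ hl _, ?_⟩
      simp only [lsec]; rw [if_neg (by decide)]; rfl
    · refine ⟨_, letter_psi (0, 1) ▸ hl _, ?_⟩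
      simp [lsec]
  | one => exact ⟨1, by rw [map_one]; exact one_mem _, rfl⟩
  | mul x y _ _ hx hy =>
    obtain ⟨f, h1, h2⟩ := hx
    obtain ⟨g, h3, h4⟩ := hy
    exact ⟨f * g, by rw [map_mul]; exact mul_mem h1 h3, by simp [h2, h4]⟩
  | inv x _ hx =>
    obtain ⟨f, h1, h2⟩ := hx
    exact ⟨f⁻¹, by rw [map_inv]; exact inv_mem h1, by simp [h2]⟩

lemma T_inf : Infinite T := by
  by_contra hfin
  rw [not_infinite_iff_finite] at hfin
  choose! F hF1 hF2 using fun s (hs : s ∈ T) => T_sur hs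
  have hinj : Function.Injective (fun s : T => (⟨psi (F s), hF1 s s.2⟩ : T)) := by
    intro s t h
    have h' := psi_inj (Subtype.ext_iff.mp h)
    ext1
    rw [← hF2 s s.2, ← hF2 t t.2, h']
  obtain ⟨s, hs⟩ := Finite.surjective_of_injective hinj ⟨A 1, A_mem 1⟩
  have := congrArg (fun p : P => p [0]) (Subtype.ext_iff.mp hs)
  simp at this

end GS

namespace Ray
variable {T : Type*} [Group T]

/-- Word length with respect to a generating set. -/
noncomputable def len (S : Set T) (g : T) : ℕ :=
  sInf {n | ∃ l : List T, (∀ t ∈ l, t ∈ S) ∧ l.prod = g ∧ l.length = n}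

lemma exists_list {S : Set T} (hS : Submonoid.closure S = ⊤) (g : T) :
    ∃ l : List T, (∀ t ∈ l, t ∈ S) ∧ l.prod = g ∧ l.length = len S g := by
  apply Nat.sInf_mem (s := {n | ∃ l : List T, (∀ t ∈ l, t ∈ S) ∧ l.prod = g ∧ l.length = n})
  obtain ⟨l, h1, h2⟩ := Submonoid.exists_list_of_mem_closure (s := S) (x := g) (by simp [hS])
  exact ⟨_, l, h1, h2, rfl⟩

lemma len_le {S : Set T} (l : List T) (hl : ∀ t ∈ l, t ∈ S) : len S l.prod ≤ l.length :=
  Nat.sInf_le ⟨l, hl, rfl, rfl⟩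

lemma len_mul {S : Set T} (hS : Submonoid.closure S = ⊤) (g h : T) :
    len S (g * h) ≤ len S g + len S h := by
  obtain ⟨l, h1, h2, h3⟩ := exists_list hS g
  obtain ⟨m, k1, k2, k3⟩ := exists_list hS h
  have := len_le (S := S) (l ++ m) (by
    intro t ht; rcases List.mem_append.mp ht with h | h
    · exact h1 t h
    · exact k1 t h)
  simp only [List.prod_append, List.length_append] at this
  rwa [h2, k2, h3, k3] at this

lemma len_gen {S : Set T} {s : T} (hs : s ∈ S) : len S s ≤ 1 := by
  have := len_le (S := S) [s] (by simpa using hs)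
  simpa using this

def desc (S : Set T) (x : T) : Set T := {y | len S y = len S (y * x⁻¹) + len S x}

lemma step {S : Set T} (hS : Submonoid.closure S = ⊤) (hfin : S.Finite) (x : T)
    (hx : (desc S x).Infinite) :
    ∃ y, (∃ s ∈ S, y = s * x) ∧ len S y = len S x + 1 ∧ (desc S y).Infinite := by
  by_contra! hcon
  have hsub : desc S x ⊆ {x} ∪ ⋃ s ∈ S, {y | y ∈ desc S (s * x) ∧ len S (s * x) = len S x + 1} := by
    intro y hy
    by_cases hyx : y = x
    · left; exact hyx
    right
    obtain ⟨l, h1, h2, h3⟩ := exists_list hS (y * x⁻¹)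
    have hne : l ≠ [] := by
      rintro rfl
      apply hyx
      simp at h2
      exact (mul_inv_eq_one.mp h2.symm)
    obtain ⟨m, s, rfl⟩ : ∃ m s, l = m ++ [s] := ⟨_, _, (List.dropLast_append_getLast hne).symm⟩
    have hs : s ∈ S := h1 s (by simp)
    have hm : y * (s * x)⁻¹ = m.prod := by
      simp at h2
      rw [mul_inv_rev, ← mul_assoc, ← h2]; group
    have hml := len_le (S := S) m (fun t ht => h1 t (by simp [ht]))
    have e1 := len_mul hS s x
    have e2 := len_gen hs
    have e3 := len_mul hS (y * (s * x)⁻¹) (s * x)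
    rw [inv_mul_cancel_right] at e3
    simp only [desc, Set.mem_ofPred_eq] at hy
    simp at h3
    simp only [Set.mem_iUnion, Set.mem_ofPred_eq, desc]
    rw [← hm] at hml
    exact ⟨s, hs, by omega, by omega⟩
  refine hx (Set.Finite.subset ?_ hsub)
  refine (Set.finite_singleton x).union (hfin.biUnion fun s hs => ?_)
  by_cases h : len S (s * x) = len S x + 1
  · have := hcon (s * x) ⟨s, hs, rfl⟩ h
    exact this.subset fun y hy => hy.1
  · convert Set.finite_empty (α := T)
    ext y; simp [h]

lemma exists_ray [Infinite T] (S : Set T) (hS : Submonoid.closure S = ⊤) (hfin : S.Finite) :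
    ∃ (x : ℕ → T) (s : ℕ → T), Function.Injective x ∧ (∀ n, s n ∈ S) ∧
      ∀ n, x (n + 1) = s n * x n := by
  have h1 : len S (1 : T) = 0 := by
    have := len_le (S := S) [] (by simp)
    simpa using this
  have h0 : (desc S (1 : T)).Infinite := by
    have : desc S (1 : T) = Set.univ := by ext y; simp [desc, h1]
    rw [this]; exact Set.infinite_univ
  choose F hF1 hF2 hF3 using step hS hfin
  let X : ℕ → {x : T // (desc S x).Infinite} := fun n =>
    Nat.rec ⟨1, h0⟩ (fun _ x => ⟨F x.1 x.2, hF3 x.1 x.2⟩) n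
  choose s hs hs' using fun n => hF1 (X n).1 (X n).2
  have hlen : ∀ n, len S (X n).1 = n := by
    intro n
    induction n with
    | zero => exact h1
    | succ n ih => exact (hF2 (X n).1 (X n).2).trans (by rw [ih])
  refine ⟨fun n => (X n).1, s, ?_, hs, fun n => hs' n⟩
  intro n m h
  have := congrArg (len S) h
  simpa [hlen] using this

end Ray

namespace Wr
open RegularWreathProduct
open scoped commutatorElement

universe u v

lemma lup_of_inj {r : ℕ} {w : FreeGroup (Fin r)} {H : Type u} {Γ : Type v} [Group H] [Group Γ]
    (φ : H →* Γ) (hφ : Function.Injective φ) (h : SatisfiesLawUpToPowers w Γ) :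
    SatisfiesLawUpToPowers w H := by
  intro γ
  obtain ⟨t, ht, hl⟩ := h (fun i => φ (γ i))
  refine ⟨t, ht, fun f => ?_⟩
  have hle : (Subgroup.closure (Set.range fun i => γ i ^ t i)).map φ ≤
      Subgroup.closure (Set.range fun i => φ (γ i) ^ t i) := by
    rw [MonoidHom.map_closure]
    apply Subgroup.closure_mono
    rintro _ ⟨_, ⟨i, rfl⟩, rfl⟩
    exact ⟨i, by simp⟩
  let ψ : Subgroup.closure (Set.range fun i => γ i ^ t i) →*
      Subgroup.closure (Set.range fun i => φ (γ i) ^ t i) :=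
    (φ.comp (Subgroup.subtype _)).codRestrict _ (fun x => hle ⟨x.1, x.2, rfl⟩)
  have := hl (ψ.comp f)
  have h2 : φ (f w).1 = 1 := Subtype.ext_iff.mp this
  ext1
  exact hφ (h2.trans (map_one φ).symm)

variable {D : Type u} {Q : Type v} [Group D] [Group Q]

/-- The base group of the wreath product. -/
def base : (Q → D) →* D ≀ᵣ Q where
  toFun f := ⟨f, 1⟩
  map_one' := rfl
  map_mul' f g := by ext <;> simp

@[simp] lemma base_left (f : Q → D) : (base f).left = f := rfl
@[simp] lemma base_right (f : Q → D) : (base f).right = 1 := rfl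

lemma base_inj : Function.Injective (base : (Q → D) →* D ≀ᵣ Q) := fun f g h => by
  simpa using congrArg RegularWreathProduct.left h

lemma conj_base (q : Q) (f : Q → D) :
    (inl q : D ≀ᵣ Q) * base f * (inl q)⁻¹ = base (fun x => f (q⁻¹ * x)) := by
  ext <;> simp

/-- Elements of the wreath product with finitely many values. -/
def FR (D : Type u) (Q : Type v) [Group D] [Group Q] : Subgroup (D ≀ᵣ Q) where
  carrier := {g | (Set.range g.left).Finite}
  one_mem' := by
    refine (Set.finite_singleton (1 : D)).subset ?_
    rintro _ ⟨x, rfl⟩; rfl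
  mul_mem' := by
    intro a b ha hb
    refine (Set.Finite.image2 (· * ·) ha hb).subset ?_
    rintro _ ⟨x, rfl⟩
    exact ⟨_, ⟨x, rfl⟩, _, ⟨a.right⁻¹ * x, rfl⟩, rfl⟩
  inv_mem' := by
    intro a ha
    refine (Set.Finite.image (·⁻¹) ha).subset ?_
    rintro _ ⟨x, rfl⟩
    exact ⟨_, ⟨a.right * x, rfl⟩, rfl⟩

lemma mem_FR {g : D ≀ᵣ Q} : g ∈ FR D Q ↔ (Set.range g.left).Finite := Iff.rfl

lemma inl_mem_FR (q : Q) : (inl q : D ≀ᵣ Q) ∈ FR D Q := by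
  rw [mem_FR]
  refine (Set.finite_singleton (1 : D)).subset ?_
  rintro _ ⟨x, rfl⟩; rfl

/-- Core lemma: a family of finitely-valued functions has powers generating a group with the law. -/
lemma lup_FR {r : ℕ} {w : FreeGroup (Fin r)} (hD : SatisfiesLawUpToPowers w D)
    (hQ : ∀ q : Q, IsOfFinOrder q) : SatisfiesLawUpToPowers w (FR D Q) := by
  classical
  intro γ
  -- powers in the base
  choose k hk0 hk using fun i => isOfFinOrder_iff_pow_eq_one.mp (hQ (γ i).1.right)
  have hright : ∀ i, (((γ i) ^ k i : FR D Q) : D ≀ᵣ Q).right = 1 := by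
    intro i
    have := map_pow (rightHom : D ≀ᵣ Q →* Q) (γ i).1 (k i)
    simp only [rightHom_eq_right, hk] at this
    simpa using this
  let f : Fin r → Q → D := fun i => (((γ i) ^ k i : FR D Q) : D ≀ᵣ Q).left
  have hf : ∀ i, (((γ i) ^ k i : FR D Q) : D ≀ᵣ Q) = base (f i) := by
    intro i; ext1
    · rfl
    · exact hright i
  have hfin : ∀ i, (Set.range (f i)).Finite := fun i => ((γ i) ^ k i).2
  have hV : (Set.range (fun (x : Q) (i : Fin r) => f i x)).Finite := by
    refine (Set.Finite.pi' hfin).subset ?_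
    rintro _ ⟨x, rfl⟩ i
    exact ⟨x, rfl⟩
  choose t ht0 ht using hD
  let m : Fin r → ℕ := fun i => ∏ v ∈ hV.toFinset, t v i
  have hm0 : ∀ i, 0 < m i := fun i => Finset.prod_pos fun v _ => ht0 v i
  refine ⟨fun i => k i * m i, fun i => Nat.mul_pos (hk0 i) (hm0 i), ?_⟩
  let H := Subgroup.closure (Set.range fun i => γ i ^ (k i * m i))
  change SatisfiesLaw w H
  intro φ
  have hbase : ∀ h ∈ H, ∃ g : Q → D, (h : D ≀ᵣ Q) = base g ∧
      ∀ x, g x ∈ Subgroup.closure (Set.range fun i => f i x ^ t (fun j => f j x) i) := by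
    intro h hh
    induction hh using Subgroup.closure_induction with
    | mem h hh =>
      obtain ⟨i, rfl⟩ := hh
      refine ⟨f i ^ m i, ?_, fun x => ?_⟩
      · beta_reduce
        rw [map_pow, ← hf, pow_mul]; rfl
      · have hdvd : t (fun j => f j x) i ∣ m i :=
          Finset.dvd_prod_of_mem (fun v => t v i) (hV.mem_toFinset.mpr ⟨x, rfl⟩)
        obtain ⟨c, hc⟩ := hdvd
        rw [Pi.pow_apply, hc, pow_mul]
        exact pow_mem (Subgroup.subset_closure (Set.mem_range_self i)) _
    | one => exact ⟨1, by simp, fun x => one_mem _⟩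
    | mul a b _ _ ha hb =>
      obtain ⟨g, h1, h2⟩ := ha
      obtain ⟨g', h3, h4⟩ := hb
      exact ⟨g * g', by simp [h1, h3], fun x => mul_mem (h2 x) (h4 x)⟩
    | inv a _ ha =>
      obtain ⟨g, h1, h2⟩ := ha
      exact ⟨g⁻¹, by simp [h1], fun x => inv_mem (h2 x)⟩
  choose! e he1 he2 using hbase
  -- evaluation homomorphisms
  let ev : ∀ x : Q, H →* Subgroup.closure (Set.range fun i => f i x ^ t (fun j => f j x) i) :=
    fun x => MonoidHom.mk' (fun h => ⟨e h.1 x, he2 h.1 h.2 x⟩) (by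
      intro a b
      ext1
      have : base (e (a * b : H).1) = (base (e a.1 * e b.1) : D ≀ᵣ Q) := by
        rw [← he1 _ (a * b).2, map_mul, ← he1 _ a.2, ← he1 _ b.2]; rfl
      exact congrFun (base_inj this) x)
  have hz : e (φ w).1 = 1 := by
    funext x
    have := ht (fun j => f j x) ((ev x).comp φ)
    exact Subtype.ext_iff.mp this
  ext1; ext1
  rw [he1 _ (φ w).2, hz, map_one]; rfl

lemma mem_commutator_of {W : Type u} [Group W] {K : Subgroup W} {g : W} (hg : g ∈ K)
    (h : g ∈ ⁅K, K⁆) : (⟨g, hg⟩ : K) ∈ commutator K := by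
  rw [← Subgroup.map_subtype_commutator] at h
  obtain ⟨x, hx, rfl⟩ := h
  exact hx

lemma fg_closure {W : Type u} [Group W] {E : Set W} (hE : E.Finite) :
    Group.FG (Subgroup.closure E) := by
  rw [Group.fg_iff_subgroup_fg]
  exact ⟨hE.toFinset, by simp⟩

lemma exists_gens (H : Type u) [Group H] (h : Group.FG H) :
    ∃ S : Set H, S.Finite ∧ Subgroup.closure S = ⊤ := by
  obtain ⟨S, hS⟩ := h.out
  exact ⟨S, S.finite_toSet, hS⟩

theorem step1 {r : ℕ} {w : FreeGroup (Fin r)} {G : Type u} [Group G] (hfg : Group.FG G)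
    (hG : SatisfiesLawUpToPowers w G) (T : Type) [Group T] (hT : Group.FG T) [Infinite T]
    (htor : ∀ t : T, IsOfFinOrder t) :
    ∃ (Γ : Type u) (_ : Group Γ) (φ : G →* Γ), Function.Injective φ ∧ Group.FG Γ ∧ Infinite Γ ∧
      SatisfiesLawUpToPowers w Γ ∧ ∀ g, φ g ∈ commutator Γ := by
  classical
  obtain ⟨S₀, hS₀, hS₀'⟩ := exists_gens T hT
  obtain ⟨SG, hSG, hSG'⟩ := exists_gens G hfg
  obtain ⟨S, hS, hScl⟩ : ∃ S : Set T, S.Finite ∧ Submonoid.closure S = ⊤ := by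
    refine ⟨S₀ ∪ S₀⁻¹, hS₀.union hS₀.inv, ?_⟩
    rw [← Subgroup.closure_toSubmonoid, hS₀']; rfl
  obtain ⟨x, s, hx, hs, hxs⟩ := Ray.exists_ray S hScl hS
  let ind : T → T → ℤ := fun q y => if ∃ n, y = x n ∧ s n = q then 1 else 0
  let pw : G → (T → ℤ) → G ≀ᵣ T := fun g u => base (fun y => g ^ u y)
  have pw_add : ∀ g u v, pw g (u + v) = pw g u * pw g v := by
    intro g u v
    simp only [pw, ← map_mul]
    congr 1; funext y; simp [zpow_add]
  have pw_neg : ∀ g u, pw g (-u) = (pw g u)⁻¹ := by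
    intro g u
    simp only [pw, ← map_inv]
    congr 1; funext y; simp
  have pw_conj : ∀ g u q, (inl q : G ≀ᵣ T) * pw g u * (inl q)⁻¹ = pw g (fun y => u (q⁻¹ * y)) := by
    intro g u q
    simp only [pw, conj_base]
  let E : Set (G ≀ᵣ T) := (fun q => inl q) '' S ∪ Set.image2 (fun q g => pw g (ind q)) S SG
  have hE : E.Finite := (hS.image _).union (Set.Finite.image2 _ hS hSG)
  let K := Subgroup.closure E
  have hinl : ∀ q, (inl q : G ≀ᵣ T) ∈ K := by
    intro q
    have hq : q ∈ Submonoid.closure S := by rw [hScl]; trivial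
    induction hq using Submonoid.closure_induction with
    | mem q hq => exact Subgroup.subset_closure (Or.inl ⟨q, hq, rfl⟩)
    | one => rw [map_one]; exact one_mem _
    | mul a b _ _ ha hb => rw [map_mul]; exact mul_mem ha hb
  have hKFR : K ≤ FR G T := by
    rw [Subgroup.closure_le]
    rintro _ (⟨q, hq, rfl⟩ | ⟨q, hq, g, hg, rfl⟩)
    · exact inl_mem_FR q
    · change (Set.range _).Finite
      refine (Set.toFinite ({g ^ (1 : ℤ), g ^ (0 : ℤ)} : Set G)).subset ?_
      rintro _ ⟨y, rfl⟩
      simp only [pw, base_left, ind]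
      split_ifs <;> simp
  have hsum : ∑ q ∈ hS.toFinset, (ind q + -(fun y => ind q (q⁻¹ * y))) = Pi.single (x 0) 1 := by
    funext y
    have h1 : ∑ q ∈ hS.toFinset, ind q y = if ∃ n, y = x n then 1 else 0 := by
      split_ifs with h
      · obtain ⟨n, rfl⟩ := h
        rw [Finset.sum_eq_single (s n)]
        · simp only [ind]; rw [if_pos ⟨n, rfl, rfl⟩]
        · intro q _ hq
          simp only [ind]; rw [if_neg]
          rintro ⟨m, hm, rfl⟩
          exact hq (by rw [hx hm])
        · intro h; exact absurd (hS.mem_toFinset.mpr (hs n)) h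
      · refine Finset.sum_eq_zero fun q _ => ?_
        simp only [ind]; rw [if_neg]
        rintro ⟨n, hn, _⟩; exact h ⟨n, hn⟩
    have h2 : ∑ q ∈ hS.toFinset, ind q (q⁻¹ * y) = if ∃ n, y = x (n + 1) then 1 else 0 := by
      split_ifs with h
      · obtain ⟨n, rfl⟩ := h
        rw [Finset.sum_eq_single (s n)]
        · simp only [ind]; rw [if_pos ⟨n, by rw [hxs]; group, rfl⟩]
        · intro q _ hq
          simp only [ind]; rw [if_neg]
          rintro ⟨m, hm, rfl⟩
          rw [inv_mul_eq_iff_eq_mul, ← hxs] at hm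
          exact hq (by rw [Nat.succ_injective (hx hm)])
        · intro h; exact absurd (hS.mem_toFinset.mpr (hs n)) h
      · refine Finset.sum_eq_zero fun q _ => ?_
        simp only [ind]; rw [if_neg]
        rintro ⟨n, hn, rfl⟩
        rw [inv_mul_eq_iff_eq_mul, ← hxs] at hn
        exact h ⟨n, hn⟩
    simp only [Finset.sum_apply, Pi.add_apply, Pi.neg_apply, Finset.sum_add_distrib,
      Finset.sum_neg_distrib]
    rw [h1, h2]
    by_cases h : ∃ n, y = x n
    · obtain ⟨n, rfl⟩ := h
      rw [if_pos ⟨n, rfl⟩]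
      rcases n with _ | n
      · rw [if_neg]
        · simp
        · rintro ⟨n, hn⟩; exact absurd (hx hn) (by simp)
      · rw [if_pos ⟨n, rfl⟩, Pi.single_eq_of_ne]
        · simp
        · intro hn; exact absurd (hx hn) (by simp)
    · rw [if_neg h, if_neg (fun ⟨n, hn⟩ => h ⟨n + 1, hn⟩), Pi.single_eq_of_ne]
      · simp
      · intro hn; exact h ⟨0, hn⟩
  let φ₀ : G →* G ≀ᵣ T := base.comp (MonoidHom.mulSingle (fun _ : T => G) (x 0))
  have hφ₀ : Function.Injective φ₀ := base_inj.comp (f := fun g : G => (Pi.mulSingle (x 0) g : T → G)) (fun a b h => by simpa using congrFun h (x 0))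
  have hgen : ∀ g ∈ SG, φ₀ g ∈ ⁅K, K⁆ := by
    intro g hg
    have h1 : φ₀ g = pw g (Pi.single (x 0) 1) := by
      simp only [φ₀, pw, MonoidHom.comp_apply]
      congr 1
      funext y
      by_cases hy : y = x 0
      · subst hy; simp
      · simp [hy]
    rw [h1, ← hsum]
    refine Finset.sum_induction _ (fun u => pw g u ∈ ⁅K, K⁆) ?_ ?_ ?_
    · intro u v hu hv; rw [pw_add]; exact mul_mem hu hv
    · have : pw g 0 = 1 := by
        simp only [pw, Pi.zero_apply, zpow_zero]; exact map_one _
      rw [this]; exact one_mem _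
    · intro q hq
      rw [pw_add, pw_neg, ← pw_conj g (ind q) q]
      have : pw g (ind q) * ((inl q : G ≀ᵣ T) * pw g (ind q) * (inl q)⁻¹)⁻¹ =
          ⁅pw g (ind q), (inl q : G ≀ᵣ T)⁆ := by
        rw [commutatorElement_def]; group
      rw [this]
      exact Subgroup.commutator_mem_commutator
        (Subgroup.subset_closure (Or.inr ⟨q, hS.mem_toFinset.mp hq, g, hg, rfl⟩)) (hinl q)
  have hcomm : ∀ g, φ₀ g ∈ ⁅K, K⁆ := by
    intro g
    have : Subgroup.closure SG ≤ (⁅K, K⁆).comap φ₀ := by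
      rw [Subgroup.closure_le]; exact hgen
    rw [hSG'] at this
    exact this (Subgroup.mem_top g)
  have hφK : ∀ g, φ₀ g ∈ K := fun g => Subgroup.commutator_le_self K (hcomm g)
  refine ⟨K, inferInstance, φ₀.codRestrict K hφK, ?_, fg_closure hE, ?_, ?_, ?_⟩
  · intro a b h
    exact hφ₀ (Subtype.ext_iff.mp h)
  · refine Infinite.of_injective (fun q : T => (⟨inl q, hinl q⟩ : K)) ?_
    intro a b h
    exact congrArg RegularWreathProduct.right (Subtype.ext_iff.mp h)
  · exact lup_of_inj (Subgroup.inclusion hKFR) (Subgroup.inclusion_injective _) (lup_FR hG htor)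
  · intro g
    exact mem_commutator_of (hφK g) (hcomm g)

theorem step2 {r : ℕ} {w : FreeGroup (Fin r)} {D : Type u} [Group D] (hfg : Group.FG D)
    (hD : SatisfiesLawUpToPowers w D) [Infinite D] (Q : Type) [Group Q] [Finite Q]
    (hQ : commutator Q = ⊤) (p q : Q) (hp : p ≠ 1) (hq : q ≠ 1) (hpq : p ≠ q) :
    ∃ (Γ : Type u) (_ : Group Γ) (φ : commutator D →* Γ), Function.Injective φ ∧ Group.FG Γ ∧
      commutator Γ = ⊤ ∧ Infinite Γ ∧ SatisfiesLawUpToPowers w Γ := by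
  classical
  obtain ⟨SD, hSD, hSD'⟩ := exists_gens D hfg
  let d : Q → D → Q → D := fun a g => Pi.mulSingle 1 g * (Pi.mulSingle a g)⁻¹
  let E : Set (D ≀ᵣ Q) := Set.range (fun a => inl a) ∪
    Set.image2 (fun a g => base (d a g)) Set.univ SD
  have hE : E.Finite := (Set.finite_range _).union (Set.Finite.image2 _ Set.finite_univ hSD)
  let K := Subgroup.closure E
  have hinl : ∀ a, (inl a : D ≀ᵣ Q) ∈ K := fun a => Subgroup.subset_closure (Or.inl ⟨a, rfl⟩)
  have hd : ∀ a, ∀ g ∈ SD, base (d a g) ∈ K := fun a g hg =>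
    Subgroup.subset_closure (Or.inr ⟨a, trivial, g, hg, rfl⟩)
  have hKFR : K ≤ FR D Q := fun g _ => Set.finite_range _
  have hcocycle : ∀ a b g, base (d (a * b) g) =
      base (d a g) * ((inl a : D ≀ᵣ Q) * base (d b g) * (inl a)⁻¹) := by
    intro a b g
    rw [conj_base, ← map_mul]
    congr 1
    funext y
    have e1 : (Pi.mulSingle (1 : Q) g : Q → D) (a⁻¹ * y) = (Pi.mulSingle a g : Q → D) y := by
      simp only [Pi.mulSingle_apply, inv_mul_eq_iff_eq_mul, mul_one]
    have e2 : (Pi.mulSingle b g : Q → D) (a⁻¹ * y) = (Pi.mulSingle (a * b) g : Q → D) y := by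
      simp only [Pi.mulSingle_apply, inv_mul_eq_iff_eq_mul]
    simp only [d, Pi.mul_apply, Pi.inv_apply, e1, e2]
    group
  have hperf : K ≤ ⁅K, K⁆ := by
    conv_lhs => rw [show K = Subgroup.closure E from rfl]
    rw [Subgroup.closure_le]
    rintro _ (⟨a, rfl⟩ | ⟨a, -, g, hg, rfl⟩)
    · have h1 : (commutator Q).map (inl : Q →* D ≀ᵣ Q) ≤ ⁅K, K⁆ := by
        rw [commutator_def, Subgroup.map_commutator]
        refine Subgroup.commutator_mono ?_ ?_ <;>
        · rintro _ ⟨b, -, rfl⟩; exact hinl b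
      exact h1 ⟨a, by rw [hQ]; trivial, rfl⟩
    · let θ : Q →* Abelianization K := MonoidHom.mk'
        (fun a => Abelianization.of ⟨base (d a g), hd a g hg⟩) (by
          intro a b
          have : (⟨base (d (a * b) g), hd _ g hg⟩ : K) = ⟨base (d a g), hd a g hg⟩ *
              (⟨inl a, hinl a⟩ * ⟨base (d b g), hd b g hg⟩ * ⟨inl a, hinl a⟩⁻¹) :=
            Subtype.ext (hcocycle a b g)
          rw [this]
          simp only [map_mul, map_inv]
          rw [mul_right_comm (Abelianization.of _) (Abelianization.of _) _⁻¹, mul_inv_cancel, one_mul])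
      have h1 : a ∈ θ.ker := Abelianization.commutator_subset_ker θ (by rw [hQ]; trivial)
      have h2 : (⟨base (d a g), hd a g hg⟩ : K) ∈ commutator K := by
        rw [← Abelianization.ker_of]; exact h1
      rw [SetLike.mem_coe, ← Subgroup.map_subtype_commutator]
      exact ⟨_, h2, rfl⟩
  have hM : ∀ a : Q, a ≠ 1 → ∀ g : D, ∃ f : Q → D, base f ∈ K ∧ f 1 = g ∧
      ∀ y, y ≠ 1 → y ≠ a → f y = 1 := by
    intro a ha g
    have hg : g ∈ Subgroup.closure SD := by rw [hSD']; trivial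
    induction hg using Subgroup.closure_induction with
    | mem g hg =>
      refine ⟨d a g, hd a g hg, ?_, ?_⟩
      · simp [d, ha.symm]
      · intro y h1 h2; simp [d, h1, h2]
    | one => exact ⟨1, by rw [map_one]; exact one_mem _, rfl, fun _ _ _ => rfl⟩
    | mul g h _ _ hg hh =>
      obtain ⟨f, h1, h2, h3⟩ := hg
      obtain ⟨f', k1, k2, k3⟩ := hh
      refine ⟨f * f', by rw [map_mul]; exact mul_mem h1 k1, by simp [h2, k2], ?_⟩
      intro y hy hy'; simp [h3 y hy hy', k3 y hy hy']
    | inv g _ hg =>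
      obtain ⟨f, h1, h2, h3⟩ := hg
      refine ⟨f⁻¹, by rw [map_inv]; exact inv_mem h1, by simp [h2], ?_⟩
      intro y hy hy'; simp [h3 y hy hy']
  let φ₀ : D →* D ≀ᵣ Q := base.comp (MonoidHom.mulSingle (fun _ : Q => D) 1)
  have hφ₀ : Function.Injective φ₀ := base_inj.comp (f := fun g : D => (Pi.mulSingle 1 g : Q → D)) (fun a b h => by simpa using congrFun h 1)
  have hcomm : commutator D ≤ K.comap φ₀ := by
    rw [commutator_def, Subgroup.commutator_le]
    intro g _ h _
    obtain ⟨f, h1, h2, h3⟩ := hM p hp g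
    obtain ⟨f', k1, k2, k3⟩ := hM q hq h
    have : φ₀ ⁅g, h⁆ = ⁅base f, base f'⁆ := by
      rw [← map_commutatorElement]
      simp only [φ₀, MonoidHom.comp_apply]
      congr 1
      funext y
      by_cases hy : y = 1
      · subst hy; simp [commutatorElement_def, h2, k2]
      · by_cases hyp : y = p
        · subst hyp
          simp [commutatorElement_def, hy, k3 y hy hpq]
        · simp [commutatorElement_def, hy, h3 y hy hyp]
    rw [Subgroup.mem_comap, this, commutatorElement_def]
    exact mul_mem (mul_mem (mul_mem h1 k1) (inv_mem h1)) (inv_mem k1)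
  refine ⟨K, inferInstance, (φ₀.comp (commutator D).subtype).codRestrict K
    (fun g => hcomm g.2), ?_, fg_closure hE, ?_, ?_, ?_⟩
  · intro a b h
    exact Subtype.ext (hφ₀ (Subtype.ext_iff.mp h))
  · rw [eq_top_iff]
    rintro ⟨g, hg⟩ -
    exact mem_commutator_of hg (hperf hg)
  · choose f hf1 hf2 _ using hM p hp
    refine Infinite.of_injective (fun g : D => (⟨base (f g), hf1 g⟩ : K)) ?_
    intro a b h
    have := base_inj (Subtype.ext_iff.mp h)
    rw [← hf2 a, ← hf2 b, this]
  · exact lup_of_inj (Subgroup.inclusion hKFR) (Subgroup.inclusion_injective _)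
      (lup_FR hD (fun q => isOfFinOrder_iff_pow_eq_one.mpr
        ⟨Nat.card Q, Nat.card_pos, pow_card_eq_one'⟩))

end Wr

/-- Every finitely generated, residually finite group satisfying the law `w` up to
powers embeds into a finitely generated, perfect, infinite group satisfying the law
`w` up to powers. -/
theorem embeds_into_fg_perfect_group_with_law {r : ℕ} (hr : 0 < r)
    (w : FreeGroup (Fin r)) {G : Type u} [Group G]
    (hfg : Group.FG G) (hrf : ResiduallyFinite G) (hlaw : SatisfiesLawUpToPowers w G) :
    ∃ (Γ : Type u) (_ : Group Γ) (φ : G →* Γ),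
      Function.Injective φ ∧
      Group.FG Γ ∧
      commutator Γ = ⊤ ∧
      Infinite Γ ∧
      SatisfiesLawUpToPowers w Γ := by
  classical
  have := GS.T_inf
  obtain ⟨Γ₁, _, φ₁, hφ₁, hfg₁, _, hlaw₁, hc⟩ := Wr.step1 hfg hlaw GS.T GS.T_fg GS.T_fin
  have hcard : 2 < Nat.card (alternatingGroup (Fin 5)) := by
    rw [nat_card_alternatingGroup, Nat.card_fin]; decide
  obtain ⟨p, q, hp, hq, hpq⟩ : ∃ p q : alternatingGroup (Fin 5), p ≠ 1 ∧ q ≠ 1 ∧ p ≠ q := by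
    rw [Nat.card_eq_fintype_card, Fintype.two_lt_card_iff] at hcard
    obtain ⟨a, b, c, hab, hac, hbc⟩ := hcard
    exact ⟨a⁻¹ * b, a⁻¹ * c, by simpa [inv_mul_eq_one] using hab,
      by simpa [inv_mul_eq_one] using hac, by simpa using hbc⟩
  obtain ⟨Γ, hΓ, φ, hφ, h1, h2, h3, h4⟩ := Wr.step2 hfg₁ hlaw₁ (alternatingGroup (Fin 5))
    (commutator_alternatingGroup_eq_top (by simp)) p q hp hq hpq
  exact ⟨Γ, hΓ, φ.comp (φ₁.codRestrict _ hc),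
    hφ.comp (fun a b h => hφ₁ (Subtype.ext_iff.mp h)), h1, h2, h3, h4⟩
end

section
/- Let ι be a finite type and let (G_i)_{i ∈ ι} be a family of groups. The direct product Π_{i ∈ ι} G_i contains a non-abelian free subgroup if and only if there exists an index i ∈ ι such that G_i contains a non-abelian free subgroup. (Lemma 3.1 of the paper.) -/
namespace PiFree

open FreeGroup

lemma exists_letter : ∀ s t p : Fin 2 × Bool, ∃ q : Fin 2 × Bool,
    (q.1 = s.1 → q.2 = s.2) ∧ (t.1 = q.1 → t.2 = !q.2) ∧ (p.1 = q.1 → p.2 = q.2) := by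
  decide

/-- Every non-trivial element has a conjugate whose reduced word starts with `p` and ends
with `p⁻¹`. -/
lemma exists_conj (g : FreeGroup (Fin 2)) (hg : g ≠ 1) (p : Fin 2 × Bool) :
    ∃ (h : FreeGroup (Fin 2)) (M : List (Fin 2 × Bool)),
      IsReduced (p :: (M ++ [(p.1, !p.2)])) ∧
        h * g * h⁻¹ = FreeGroup.mk (p :: (M ++ [(p.1, !p.2)])) := by
  have hne : g.toWord ≠ [] := by simpa using hg
  obtain ⟨q, hq1, hq2, hq3⟩ := exists_letter (g.toWord.head hne) (g.toWord.getLast hne) p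
  have hred : IsReduced g.toWord := isReduced_toWord
  refine ⟨FreeGroup.mk [p, q], q :: (g.toWord ++ [(q.1, !q.2)]), ?_, ?_⟩
  · unfold FreeGroup.IsReduced at *
    simp only [List.cons_append, List.append_assoc, List.isChain_cons_cons]
    refine ⟨hq3, ?_⟩
    rw [List.isChain_cons, List.isChain_append]
    refine ⟨?_, hred, ?_, ?_⟩
    · intro y hy
      rw [List.head?_append_of_ne_nil _ hne, List.head?_eq_some_head hne] at hy
      cases hy
      exact hq1
    · simp only [List.nil_append, List.isChain_cons_cons, List.isChain_singleton, and_true]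
      intro h
      rw [hq3 h.symm]
    · intro x hx y hy
      rw [List.getLast?_eq_some_getLast hne] at hx
      cases hx
      simp at hy
      subst hy
      exact hq2
  · conv_lhs => rw [← g.mk_toWord]
    simp [FreeGroup.inv_mk, FreeGroup.mul_mk, FreeGroup.invRev]

lemma reduced_append {M N : List (Fin 2 × Bool)} {p r : Fin 2 × Bool} (hpr : p.1 ≠ r.1)
    (hM : IsReduced (p :: (M ++ [(p.1, !p.2)]))) (hN : IsReduced (r :: (N ++ [(r.1, !r.2)]))) :
    IsReduced ((p :: (M ++ [(p.1, !p.2)])) ++ (r :: (N ++ [(r.1, !r.2)]))) := by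
  unfold FreeGroup.IsReduced at *
  rw [List.isChain_append]
  refine ⟨hM, hN, ?_⟩
  intro x hx y hy
  rw [← List.cons_append, List.getLast?_append] at hx
  simp at hx hy
  subst hx hy
  intro h
  exact absurd h hpr

/-- Non-trivial normal subgroups of the free group intersect non-trivially. -/
lemma inf_ne_bot (A B : Subgroup (FreeGroup (Fin 2))) [A.Normal] [B.Normal]
    (hA : A ≠ ⊥) (hB : B ≠ ⊥) : A ⊓ B ≠ ⊥ := by
  intro hAB
  obtain ⟨a, ha, ha1⟩ := A.bot_or_exists_ne_one.resolve_left hA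
  obtain ⟨b, hb, hb1⟩ := B.bot_or_exists_ne_one.resolve_left hB
  obtain ⟨h, M, hM, hM'⟩ := exists_conj a ha1 (0, true)
  obtain ⟨k, N, hN, hN'⟩ := exists_conj b hb1 (1, true)
  have hc := Subgroup.commute_of_normal_of_disjoint A B inferInstance inferInstance
    (disjoint_iff.mpr hAB) _ _ (Subgroup.Normal.conj_mem inferInstance a ha h)
    (Subgroup.Normal.conj_mem inferInstance b hb k)
  rw [hM', hN'] at hc
  have hc' := hc.eq
  rw [FreeGroup.mul_mk, FreeGroup.mul_mk] at hc'
  have h1 := reduced_append (p := (0, true)) (r := (1, true)) (by decide) hM hN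
  have h2 := reduced_append (p := (1, true)) (r := (0, true)) (by decide) hN hM
  have h3 := congrArg FreeGroup.toWord hc'
  rw [FreeGroup.toWord_mk, FreeGroup.toWord_mk, h1.reduce_eq, h2.reduce_eq] at h3
  simp at h3

lemma iInf_ne_bot {ι : Type*} (K : ι → Subgroup (FreeGroup (Fin 2))) [∀ i, (K i).Normal]
    (hK : ∀ i, K i ≠ ⊥) (s : Finset ι) :
    (s.inf K).Normal ∧ s.inf K ≠ ⊥ := by
  classical
  induction s using Finset.induction_on with
  | empty =>
    rw [Finset.inf_empty]
    exact ⟨inferInstance, top_ne_bot⟩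
  | insert i s _ ih =>
    obtain ⟨h1, h2⟩ := ih
    rw [Finset.inf_insert]
    exact ⟨inferInstance, inf_ne_bot _ _ (hK i) h2⟩

end PiFree

/-- A finite direct product of groups contains a non-abelian free subgroup if and only
if one of the factors does. -/
theorem pi_containsNonabelianFree_iff {ι : Type*} [Finite ι]
    (G : ι → Type*) [∀ i, Group (G i)] :
    ContainsNonabelianFree (∀ i, G i) ↔ ∃ i, ContainsNonabelianFree (G i) := by
  classical
  constructor
  · rintro ⟨f, hf⟩
    by_contra! hcon
    have := Fintype.ofFinite ι
    have hK : ∀ i, ((Pi.evalMonoidHom G i).comp f).ker ≠ ⊥ := fun i h =>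
      hcon i ⟨_, (MonoidHom.ker_eq_bot_iff _).mp h⟩
    obtain ⟨-, h⟩ := PiFree.iInf_ne_bot (fun i => ((Pi.evalMonoidHom G i).comp f).ker) hK
      Finset.univ
    apply h
    rw [eq_bot_iff]
    intro x hx
    rw [Subgroup.mem_bot]
    apply hf
    rw [map_one]
    funext i
    have := Finset.inf_le (f := fun i => ((Pi.evalMonoidHom G i).comp f).ker)
      (Finset.mem_univ i) hx
    simpa [MonoidHom.mem_ker] using this
  · rintro ⟨i, f, hf⟩
    exact ⟨(MonoidHom.mulSingle G i).comp f, (Pi.mulSingle_injective i).comp hf⟩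
end

section
/- Let α be a type with at least two elements and let F be the free group on α. Then every pair of non-trivial normal subgroups of F intersects non-trivially: if N₁ and N₂ are normal subgroups of F with N₁ ≠ {1} and N₂ ≠ {1}, then N₁ ∩ N₂ ≠ {1}. (The key observation in the proof of Lemma 3.1 of the paper.) -/
theorem commFree_zpow {X : Type*} (hc : ∀ x y : FreeGroup X, x * y = y * x) :
    ∃ z : FreeGroup X, ∀ x, x ∈ Subgroup.zpowers z := by
  classical
  have hs : ∀ a b : X, a = b := by
    intro a b
    have h := congrArg FreeGroup.toWord (hc (FreeGroup.of a) (FreeGroup.of b))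
    have e : ∀ a b : X, FreeGroup.of a * FreeGroup.of b =
        FreeGroup.mk [(a, true), (b, true)] := fun _ _ => rfl
    rw [e, e, FreeGroup.toWord_mk, FreeGroup.toWord_mk] at h
    simp [FreeGroup.reduce.cons] at h
    exact h.1
  rcases isEmpty_or_nonempty X with hX | ⟨⟨a⟩⟩
  · exact ⟨1, fun x => by rw [Subsingleton.elim x 1]; exact one_mem _⟩
  · refine ⟨FreeGroup.of a, fun x => ?_⟩
    have hx : x ∈ Subgroup.closure (Set.range (FreeGroup.of : X → _)) := by
      rw [FreeGroup.closure_range_of]; trivial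
    refine (Subgroup.closure_le _).2 ?_ hx
    rintro _ ⟨b, rfl⟩
    rw [hs b a]
    exact Subgroup.mem_zpowers _

/-- In a free group on at least two generators, any two non-trivial normal subgroups
intersect non-trivially. -/
theorem freeGroup_normal_inf_ne_bot {α : Type*} [Nontrivial α]
    (N₁ N₂ : Subgroup (FreeGroup α)) (h₁ : N₁.Normal) (h₂ : N₂.Normal)
    (hN₁ : N₁ ≠ ⊥) (hN₂ : N₂ ≠ ⊥) : N₁ ⊓ N₂ ≠ ⊥ := by
  intro hbot
  obtain ⟨u, hu, hu1⟩ := N₁.bot_or_exists_ne_one.resolve_left hN₁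
  obtain ⟨v, hv, hv1⟩ := N₂.bot_or_exists_ne_one.resolve_left hN₂
  have huv : u * v = v * u :=
    Subgroup.commute_of_normal_of_disjoint N₁ N₂ h₁ h₂ (disjoint_iff.2 hbot) u v hu hv
  let H := Subgroup.closure ({u, v} : Set (FreeGroup α))
  have hcomm : ∀ x y : H, x * y = y * x := by
    have : ∀ x ∈ ({u, v} : Set (FreeGroup α)), ∀ y ∈ ({u, v} : Set (FreeGroup α)),
        x * y = y * x := by
      rintro x (rfl | rfl) y (rfl | rfl) <;> first | rfl | exact huv | exact huv.symm
    have := Subgroup.isMulCommutative_closure this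
    intro x y
    exact this.is_comm.comm x y
  let e : FreeGroup (IsFreeGroup.Generators H) ≃* H := IsFreeGroup.mulEquiv H
  obtain ⟨z, hz⟩ := commFree_zpow (X := IsFreeGroup.Generators H) fun x y => e.injective (by
    rw [map_mul, map_mul, hcomm])
  have key : ∀ x ∈ H, ∃ n : ℤ, x = (e z : FreeGroup α) ^ n := by
    intro x hx
    obtain ⟨n, hn⟩ := hz (e.symm ⟨x, hx⟩)
    refine ⟨n, ?_⟩
    have := congrArg (fun t => ((e t : H) : FreeGroup α)) hn
    simpa using this.symm
  obtain ⟨m, hm⟩ := key u (Subgroup.subset_closure (by simp))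
  obtain ⟨n, hn⟩ := key v (Subgroup.subset_closure (by simp))
  have hn0 : n ≠ 0 := by
    rintro rfl
    exact hv1 (by simpa using hn)
  have hmem : u ^ n ∈ N₁ ⊓ N₂ := by
    refine ⟨N₁.zpow_mem hu n, ?_⟩
    have : u ^ n = v ^ m := by
      rw [hm, hn, ← zpow_mul, ← zpow_mul, mul_comm]
    rw [this]
    exact N₂.zpow_mem hv m
  rw [hbot, Subgroup.mem_bot] at hmem
  exact hu1 (zpow_left_injective hn0 (by simpa using hmem))
end

section
/- Let F be a finite group of cardinality n (with n ≥ 1). Then there exists an injective group homomorphism φ : F → Alt(2n+3), where Alt(2n+3) is the alternating group on a set with 2n+3 elements (e.g. Fin (2n+3)), such that Alt(2n+3) is generated by the F-conjugates of Alt(5): the subgroup of Alt(2n+3) generated by the set { φ(f) τ φ(f)⁻¹ : f ∈ F, τ ∈ A₅ } equals all of Alt(2n+3), where A₅ denotes the subgroup of Alt(2n+3) consisting of all even permutations that fix every point outside {0,1,2,3,4}. (Lemma 3.2 of the paper.) -/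
open Equiv Equiv.Perm in
theorem aux_gen {X : Type*} [Fintype X] [DecidableEq X] (H : Subgroup (alternatingGroup X))
    (a b : X) (hab : a ≠ b)
    (h : ∀ x, x ≠ a → ∃ h ∈ H, (h : Perm X) = swap a b * swap a x) : H = ⊤ := by
  set K : Subgroup (Perm X) := H.map (alternatingGroup X).subtype with hK
  have hK1 : ∀ x, x ≠ a → swap a b * swap a x ∈ K := by
    intro x hx
    obtain ⟨g, hg, e⟩ := h x hx
    exact ⟨g, hg, e⟩
  have hK2 : ∀ x, x ≠ a → swap a x * swap a b ∈ K := by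
    intro x hx
    have := K.inv_mem (hK1 x hx)
    simpa using this
  have step : ∀ x (σ : Perm X), (σ ∈ K ∨ swap a b * σ ∈ K) →
      (swap a x * σ ∈ K ∨ swap a b * (swap a x * σ) ∈ K) := by
    intro x σ hs
    by_cases hx : x = a
    · subst hx
      simpa [← Perm.one_def] using hs
    rcases hs with hs | hs
    · right
      rw [← mul_assoc]
      exact K.mul_mem (hK1 x hx) hs
    · left
      have := K.mul_mem (hK2 x hx) hs
      rwa [mul_assoc, Equiv.swap_mul_self_mul] at this
  have all : ∀ σ : Perm X, σ ∈ K ∨ swap a b * σ ∈ K := by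
    intro σ
    induction σ using swap_induction_on with
    | one => left; exact K.one_mem
    | swap_mul f x y hxy ih =>
      by_cases hx : x = a
      · subst hx; exact step y f ih
      by_cases hy : y = a
      · subst hy; rw [swap_comm]; exact step x f ih
      have e : swap x y = swap a x * (swap a y * swap a x) := by
        have := Equiv.swap_apply_apply (swap a x) a y
        rw [swap_apply_left, swap_apply_of_ne_of_ne hy (Ne.symm hxy)] at this
        simpa [mul_assoc] using this
      rw [e, mul_assoc, mul_assoc]
      exact step _ _ (step _ _ (step _ _ ih))
  rw [eq_top_iff]
  rintro ⟨σ, hσ⟩ -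
  rcases all σ with ⟨g, hg, e⟩ | ⟨g, hg, e⟩
  · have : g = ⟨σ, hσ⟩ := Subtype.ext e
    exact this ▸ hg
  · exfalso
    have h1 : sign (g : Perm X) = 1 := g.2
    have h2 : sign σ = 1 := hσ
    change (g : Perm X) = _ at e
    rw [e, Perm.sign_mul, h2, sign_swap hab] at h1
    revert h1
    decide

open Equiv Equiv.Perm in
def auxHom (F : Type*) [Group F] : F →* Perm (Fin 3 ⊕ F × Fin 2) where
  toFun f := Perm.sumCongr 1 (prodCongrLeft fun _ => Equiv.mulLeft f)
  map_one' := by ext x; rcases x with x | ⟨x, y⟩ <;> simp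
  map_mul' f g := by ext x; rcases x with x | ⟨x, y⟩ <;> simp [mul_assoc]

theorem aux_equiv (F : Type*) [Group F] [Fintype F]
    (n : ℕ) (hn : Fintype.card F = n) (hn1 : 1 ≤ n) :
    ∃ e : (Fin 3 ⊕ F × Fin 2) ≃ Fin (2 * n + 3),
      (∀ i, (e (.inl i) : ℕ) < 5) ∧ ∀ j, (e (.inr (1, j)) : ℕ) < 5 := by
  classical
  let g : F ≃ Fin n := (Fintype.equivFinOfCardEq hn).setValue 1 ⟨0, hn1⟩
  have hg : g 1 = ⟨0, hn1⟩ := Equiv.setValue_eq _ _ _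
  refine ⟨((Equiv.sumCongr (Equiv.refl _) ((Equiv.prodCongr g (Equiv.refl _)).trans
    finProdFinEquiv)).trans finSumFinEquiv).trans (finCongr (by ring)), ?_, ?_⟩
  · intro i; simp; omega
  · intro j; simp [hg]; omega


/-- Every finite group `F` of order `n` embeds into the alternating group
`Alt(2n+3)` in such a way that `Alt(2n+3)` is generated by the `F`-conjugates of the
copy of `Alt(5)` consisting of the even permutations fixing every point outside
`{0, 1, 2, 3, 4}`. -/
theorem finite_group_embeds_with_alt_conjugates (F : Type*) [Group F] [Fintype F]
    (n : ℕ) (hn : Fintype.card F = n) (hn1 : 1 ≤ n) :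
    ∃ φ : F →* ↥(alternatingGroup (Fin (2 * n + 3))),
      Function.Injective φ ∧
      Subgroup.closure
        { x : ↥(alternatingGroup (Fin (2 * n + 3))) |
          ∃ (f : F) (τ : ↥(alternatingGroup (Fin (2 * n + 3)))),
            (∀ i : Fin (2 * n + 3), 5 ≤ (i : ℕ) →
              (τ : Equiv.Perm (Fin (2 * n + 3))) i = i) ∧
            x = φ f * τ * (φ f)⁻¹ } = ⊤ := by

  classical
  obtain ⟨e, he1, he2⟩ := aux_equiv F n hn hn1
  let ψ : F →* Equiv.Perm (Fin (2 * n + 3)) :=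
    (e.permCongrHom : _ →* Equiv.Perm (Fin (2 * n + 3))).comp (auxHom F)
  have hψ : ∀ f x, ψ f (e x) = e (auxHom F f x) := by
    intro f x
    simp [ψ, Equiv.permCongrHom, Equiv.permCongr_apply]
  have hsign : ∀ f, ψ f ∈ alternatingGroup (Fin (2 * n + 3)) := by
    intro f
    rw [Equiv.Perm.mem_alternatingGroup]
    change Equiv.Perm.sign (e.permCongr (auxHom F f)) = 1
    rw [Equiv.Perm.sign_permCongr]
    change Equiv.Perm.sign (Equiv.Perm.sumCongr 1 (Equiv.prodCongrLeft fun _ => Equiv.mulLeft f)) = 1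
    rw [Equiv.Perm.sign_sumCongr, Equiv.Perm.sign_prodCongrLeft]
    simp [← sq, Int.units_sq]
  refine ⟨ψ.codRestrict _ hsign, ?_, ?_⟩
  · intro f g hfg
    have h1 : ψ f = ψ g := congrArg Subtype.val hfg
    have h2 := hψ f (.inr (1, 0))
    rw [h1, hψ g] at h2
    simpa [auxHom] using (e.injective h2).symm
  · have hab : e (.inl 0) ≠ e (.inl 1) := by simp
    refine aux_gen _ (e (.inl 0)) (e (.inl 1)) hab ?_
    have key : ∀ (f : F) (y : Fin 3 ⊕ F × Fin 2), (e y : ℕ) < 5 → y ≠ .inl 0 →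
        ∃ h ∈ Subgroup.closure
        { x : ↥(alternatingGroup (Fin (2 * n + 3))) |
          ∃ (f : F) (τ : ↥(alternatingGroup (Fin (2 * n + 3)))),
            (∀ i : Fin (2 * n + 3), 5 ≤ (i : ℕ) →
              (τ : Equiv.Perm (Fin (2 * n + 3))) i = i) ∧
            x = ψ.codRestrict _ hsign f * τ * (ψ.codRestrict _ hsign f)⁻¹ },
          (h : Equiv.Perm (Fin (2 * n + 3))) = Equiv.swap (e (.inl 0)) (e (.inl 1)) *
            Equiv.swap (e (.inl 0)) (e (auxHom F f y)) := by
      intro f y hy hy0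
      let τ : alternatingGroup (Fin (2 * n + 3)) :=
        ⟨Equiv.swap (e (.inl 0)) (e (.inl 1)) * Equiv.swap (e (.inl 0)) (e y), by
          rw [Equiv.Perm.mem_alternatingGroup, Equiv.Perm.sign_mul, Equiv.Perm.sign_swap hab,
            Equiv.Perm.sign_swap (fun h => hy0 (e.injective h).symm)]
          simp⟩
      refine ⟨_, Subgroup.subset_closure ⟨f, τ, ?_, rfl⟩, ?_⟩
      · intro i hi
        have hne : ∀ z, (e z : ℕ) < 5 → i ≠ e z := by
          rintro z hz rfl
          omega
        simp only [τ, Equiv.Perm.mul_apply]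
        rw [Equiv.swap_apply_of_ne_of_ne (hne _ (he1 0)) (hne _ hy),
          Equiv.swap_apply_of_ne_of_ne (hne _ (he1 0)) (hne _ (he1 1))]
      · change ψ f * (Equiv.swap (e (.inl 0)) (e (.inl 1)) * Equiv.swap (e (.inl 0)) (e y))
          * (ψ f)⁻¹ = _
        have h0 : ∀ i, ψ f (e (.inl i)) = e (.inl i) := by
          intro i; rw [hψ]; simp [auxHom]
        have s1 := Equiv.swap_apply_apply (ψ f) (e (.inl 0)) (e (.inl 1))
        have s2 := Equiv.swap_apply_apply (ψ f) (e (.inl 0)) (e y)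
        rw [h0, h0] at s1
        rw [h0, hψ] at s2
        rw [s2]; nth_rewrite 2 [s1]
        group
    intro x hx
    obtain ⟨z, rfl⟩ := e.surjective x
    rcases z with i | ⟨f, j⟩
    · have := key 1 (.inl i) (he1 i) (fun h => hx (by rw [h]))
      simpa only [map_one, Equiv.Perm.one_apply] using this
    · have := key f (.inr (1, j)) (he2 j) (by simp)
      have h2 : auxHom F f (.inr (1, j)) = .inr (f, j) := by simp [auxHom]
      rwa [h2] at this
end

section
/- Let P be a property of groups that is invariant under group isomorphism, closed under passing to subgroups, and closed under direct products of two groups. If G and H are groups that are locally P up to powers, then G × H is locally P up to powers. (Lemma 3.3 of the paper.) -/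
/-- A group `Γ` is locally `P` up to powers if for every finite list of elements
`γ₁, …, γ_k ∈ Γ` there are positive integers `t₁, …, t_k` such that the subgroup
`⟨γ₁^{t₁}, …, γ_k^{t_k}⟩` satisfies `P`. -/
def LocallyUpToPowers (P : (H : Type u) → [inst : Group H] → Prop)
    (Γ : Type u) [Group Γ] : Prop :=
  ∀ (k : ℕ) (γ : Fin k → Γ), ∃ t : Fin k → ℕ, (∀ i, 0 < t i) ∧
    P (Subgroup.closure (Set.range fun i => γ i ^ t i))

/-- If `P` is an isomorphism-invariant property of groups closed under subgroups and
direct products of two groups, and `G` and `H` are locally `P` up to powers, then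
`G × H` is locally `P` up to powers. -/
theorem prod_locallyUpToPowers
    (P : (H : Type u) → [inst : Group H] → Prop)
    (hiso : ∀ (A B : Type u) [Group A] [Group B], (A ≃* B) → P A → P B)
    (hsub : ∀ (A : Type u) [Group A] (K : Subgroup A), P A → P K)
    (hprod : ∀ (A B : Type u) [Group A] [Group B], P A → P B → P (A × B))
    (G H : Type u) [Group G] [Group H]
    (hG : LocallyUpToPowers P G) (hH : LocallyUpToPowers P H) :
    LocallyUpToPowers P (G × H) := by
  intro k γ
  obtain ⟨s, hs, hPs⟩ := hG k fun i => (γ i).1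
  obtain ⟨r, hr, hPr⟩ := hH k fun i => (γ i).2
  refine ⟨fun i => s i * r i, fun i => Nat.mul_pos (hs i) (hr i), ?_⟩
  set A := Subgroup.closure (Set.range fun i => (γ i).1 ^ s i) with hA
  set B := Subgroup.closure (Set.range fun i => (γ i).2 ^ r i) with hB
  have hle : Subgroup.closure (Set.range fun i => γ i ^ (s i * r i)) ≤ A.prod B := by
    rw [Subgroup.closure_le]
    rintro _ ⟨i, rfl⟩
    refine Subgroup.mem_prod.2 ⟨?_, ?_⟩
    · have h : (γ i).1 ^ s i ∈ A := Subgroup.subset_closure ⟨i, rfl⟩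
      simpa [pow_mul] using A.pow_mem h (r i)
    · have h : (γ i).2 ^ r i ∈ B := Subgroup.subset_closure ⟨i, rfl⟩
      simpa [pow_mul'] using B.pow_mem h (s i)
  have hAB : P (A.prod B) := hiso _ _ (Subgroup.prodEquiv A B).symm (hprod _ _ hPs hPr)
  exact hiso _ _ (Subgroup.subgroupOfEquivOfLe hle) (hsub _ _ hAB)
end

section
/- For every natural number n ≥ 5 and every permutation σ of Fin n, the order of σ satisfies 2^{n−1} · orderOf(σ) ≤ n!. In particular, Landau's function g(n), the maximal order of an element of the symmetric group Sym(n), satisfies g(n) ≤ n!/2^{n−1} for all n ≥ 5. (The elementary estimate used in the proof of Theorem 3.4 of the paper.) -/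
theorem aux_cube_le (k : ℕ) : k ^ 3 ≤ 3 ^ k := by
  rcases Nat.lt_or_ge k 3 with h | h
  · interval_cases k <;> norm_num
  · induction k, h using Nat.le_induction with
    | base => norm_num
    | succ m hm ih =>
      rw [pow_succ 3 m]
      nlinarith [mul_le_mul hm hm (by norm_num) (by omega), Nat.mul_le_mul_right (m * m) hm]

theorem aux_lcm_le (s : Multiset ℕ) : s.lcm ^ 3 ≤ 3 ^ s.sum := by
  induction s using Multiset.induction_on with
  | empty => simp
  | cons a s ih =>
    rw [Multiset.lcm_cons, Multiset.sum_cons, pow_add]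
    have h : Nat.lcm a s.lcm ≤ a * s.lcm := Nat.div_le_self _ _
    calc (Nat.lcm a s.lcm) ^ 3 ≤ (a * s.lcm) ^ 3 := Nat.pow_le_pow_left h 3
      _ = a ^ 3 * s.lcm ^ 3 := mul_pow _ _ _
      _ ≤ _ := Nat.mul_le_mul (aux_cube_le a) ih

theorem aux_fact (n : ℕ) (hn : 5 ≤ n) : (2 ^ (n - 1)) ^ 3 * 3 ^ n ≤ n.factorial ^ 3 := by
  induction n, hn using Nat.le_induction with
  | base => decide
  | succ m hm ih =>
    obtain ⟨k, rfl⟩ : ∃ k, m = k + 1 := ⟨m - 1, by omega⟩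
    rw [Nat.factorial_succ, mul_pow]
    have h3 : 24 ≤ (k + 1 + 1) ^ 3 :=
      le_trans (by norm_num) (Nat.pow_le_pow_left (show 6 ≤ k + 1 + 1 by omega) 3)
    calc (2 ^ (k + 1 + 1 - 1)) ^ 3 * 3 ^ (k + 1 + 1)
        = 24 * ((2 ^ (k + 1 - 1)) ^ 3 * 3 ^ (k + 1)) := by
          simp only [Nat.add_sub_cancel]; ring
      _ ≤ _ := Nat.mul_le_mul h3 ih

/-- For `n ≥ 5`, every permutation `σ` of `Fin n` satisfies
`2^(n-1) * orderOf σ ≤ n!`. In particular Landau's function, the maximal order of an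
element of `Sym(n)`, is at most `n! / 2^(n-1)`. -/
theorem orderOf_perm_le_factorial_div_two_pow (n : ℕ) (hn : 5 ≤ n)
    (σ : Equiv.Perm (Fin n)) :
    2 ^ (n - 1) * orderOf σ ≤ n.factorial ∧
    orderOf σ ≤ n.factorial / 2 ^ (n - 1) := by
  have key : 2 ^ (n - 1) * orderOf σ ≤ n.factorial := by
    refine le_of_pow_le_pow_left₀ (n := 3) (by norm_num) (Nat.zero_le _) ?_
    rw [mul_pow]
    refine le_trans (Nat.mul_le_mul_left _ ?_) (aux_fact n hn)
    rw [← Equiv.Perm.lcm_cycleType]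
    refine (aux_lcm_le _).trans (Nat.pow_le_pow_right (by norm_num) ?_)
    simpa using σ.sum_cycleType_le
  refine ⟨key, ?_⟩
  rw [Nat.le_div_iff_mul_le (by positivity), mul_comm]
  exact key
end
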